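/- arXiv:1709.00331 — 8 statements merged into one kernel-verified Lean document; each statement's English description precedes it below -/
import Mathlib

section
/- Let Ω ⊆ ℝ × (0,∞) be open and let u : ℝ × ℝ → ℝ be twice continuously differentiable on Ω and satisfy the (2+1)-dimensional equivariant Faddeev equation at every point of Ω. Define the energy density e(t,r) = r·[(1 + sin²(u)/r²)·(u_t² + u_r²)/2 + sin²(u)/(2r²)] and the flux p(t,r) = −r·(1 + sin²(u)/r²)·u_t·u_r. Then ∂_t e + ∂_r p = 0 at every point of Ω (local energy conservation for the equivariant Faddeev model). -/
/-!
This is Noether's theorem for time translations. For any Lagrangian density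
`A(r, u) (u_t² - u_r²) / 2 - V(r, u)` without explicit time dependence, the energy density `e` and
the flux `p` satisfy `∂_t e + ∂_r p = u_t * E`, where `E` is the Euler-Lagrange expression: the
terms `A u_r u_rt` of `∂_t e` and `-A u_tr u_r` of `∂_r p` cancel because mixed partial derivatives
commute. The equivariant Faddeev model has `A = r + sin² u / r` and `V = sin² u / (2 r)`, for which
`E` is `r` times the left-hand side of the Faddeev equation.
-/

open scoped Topology

section PartialDerivatives

variable {𝕜 F : Type*} [NontriviallyNormedField 𝕜] [NormedAddCommGroup F] [NormedSpace 𝕜 F]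

section NormedSpace

variable {E : Type*} [NormedAddCommGroup E] [NormedSpace 𝕜 E] {f : E → F} {x : E}

lemma eventually_differentiableAt_of_contDiffAt (hf : ContDiffAt 𝕜 1 f x) :
    ∀ᶠ y in 𝓝 x, DifferentiableAt 𝕜 f y :=
  (hf.eventually (by simp)).mono fun _ hy => hy.differentiableAt one_ne_zero

lemma hasFDerivAt_fderiv_apply (hf : ContDiffAt 𝕜 2 f x) (v : E) :
    HasFDerivAt (fun y => fderiv 𝕜 f y v) ((fderiv 𝕜 (fderiv 𝕜 f) x).flip v) x := by
  have hdiff : DifferentiableAt 𝕜 (fderiv 𝕜 f) x :=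
    (hf.fderiv_right (m := 1) one_add_one_eq_two.le).differentiableAt one_ne_zero
  simpa using hdiff.hasFDerivAt.clm_apply (hasFDerivAt_const v x)

end NormedSpace

/-- The partial derivative of `f` in its first variable, with value `0` where it does not exist. -/
noncomputable def derivFst (f : 𝕜 × 𝕜 → F) (q : 𝕜 × 𝕜) : F :=
  deriv (fun x => f (x, q.2)) q.1

/-- The partial derivative of `f` in its second variable, with value `0` where it does not exist. -/
noncomputable def derivSnd (f : 𝕜 × 𝕜 → F) (q : 𝕜 × 𝕜) : F :=
  deriv (fun y => f (q.1, y)) q.2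

variable {f : 𝕜 × 𝕜 → F} {q : 𝕜 × 𝕜}

lemma derivFst_eq_fderiv (hf : DifferentiableAt 𝕜 f q) : derivFst f q = fderiv 𝕜 f q (1, 0) :=
  (hf.hasFDerivAt.comp_hasDerivAt q.1
    ((hasDerivAt_id q.1).prodMk (hasDerivAt_const q.1 q.2))).deriv

lemma derivSnd_eq_fderiv (hf : DifferentiableAt 𝕜 f q) : derivSnd f q = fderiv 𝕜 f q (0, 1) :=
  (hf.hasFDerivAt.comp_hasDerivAt q.2
    ((hasDerivAt_const q.2 q.1).prodMk (hasDerivAt_id q.2))).deriv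

lemma hasDerivAt_comp_prodMk {x y : 𝕜 → 𝕜} {x' y' s : 𝕜} (hf : DifferentiableAt 𝕜 f (x s, y s))
    (hx : HasDerivAt x x' s) (hy : HasDerivAt y y' s) :
    HasDerivAt (fun s => f (x s, y s))
      (x' • derivFst f (x s, y s) + y' • derivSnd f (x s, y s)) s := by
  have hcomp := hf.hasFDerivAt.comp_hasDerivAt s (hx.prodMk hy)
  have hsplit : ((x', y') : 𝕜 × 𝕜) = x' • (1, 0) + y' • (0, 1) := by simp
  rw [hsplit, map_add, map_smul, map_smul, ← derivFst_eq_fderiv hf, ← derivSnd_eq_fderiv hf]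
    at hcomp
  exact hcomp

lemma hasDerivAt_derivFst (hf : DifferentiableAt 𝕜 f q) :
    HasDerivAt (fun x => f (x, q.2)) (derivFst f q) q.1 := by
  simpa using hasDerivAt_comp_prodMk hf (hasDerivAt_id q.1) (hasDerivAt_const q.1 q.2)

lemma hasDerivAt_derivSnd (hf : DifferentiableAt 𝕜 f q) :
    HasDerivAt (fun y => f (q.1, y)) (derivSnd f q) q.2 := by
  simpa using hasDerivAt_comp_prodMk hf (hasDerivAt_const q.2 q.1) (hasDerivAt_id q.2)

lemma hasFDerivAt_derivFst (hf : ContDiffAt 𝕜 2 f q) :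
    HasFDerivAt (derivFst f) ((fderiv 𝕜 (fderiv 𝕜 f) q).flip (1, 0)) q :=
  (hasFDerivAt_fderiv_apply hf (1, 0)).congr_of_eventuallyEq <|
    (eventually_differentiableAt_of_contDiffAt (hf.of_le one_le_two)).mono
      fun _ => derivFst_eq_fderiv

lemma hasFDerivAt_derivSnd (hf : ContDiffAt 𝕜 2 f q) :
    HasFDerivAt (derivSnd f) ((fderiv 𝕜 (fderiv 𝕜 f) q).flip (0, 1)) q :=
  (hasFDerivAt_fderiv_apply hf (0, 1)).congr_of_eventuallyEq <|
    (eventually_differentiableAt_of_contDiffAt (hf.of_le one_le_two)).mono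
      fun _ => derivSnd_eq_fderiv

lemma derivSnd_derivFst_comm (hf : ContDiffAt 𝕜 (minSmoothness 𝕜 2) f q) :
    derivSnd (derivFst f) q = derivFst (derivSnd f) q := by
  have hf₂ : ContDiffAt 𝕜 2 f q := hf.of_le le_minSmoothness
  have hFst := hasFDerivAt_derivFst hf₂
  have hSnd := hasFDerivAt_derivSnd hf₂
  rw [derivSnd_eq_fderiv hFst.differentiableAt, derivFst_eq_fderiv hSnd.differentiableAt,
    hFst.fderiv, hSnd.fderiv]
  exact (hf.isSymmSndFDerivAt le_rfl).eq (0, 1) (1, 0)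

end PartialDerivatives

section EnergyBalance

/-- The energy density of a field `u(t, r)` with Lagrangian density
`A(r, u) (u_t² - u_r²) / 2 - V(r, u)`. -/
noncomputable def energyDensity (A V u : ℝ × ℝ → ℝ) (q : ℝ × ℝ) : ℝ :=
  A (q.2, u q) * (derivFst u q ^ 2 + derivSnd u q ^ 2) / 2 + V (q.2, u q)

/-- The energy flux of a field `u(t, r)` with Lagrangian density
`A(r, u) (u_t² - u_r²) / 2 - V(r, u)`; the potential `V` does not contribute. -/
noncomputable def energyFlux (A u : ℝ × ℝ → ℝ) (q : ℝ × ℝ) : ℝ :=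
  -A (q.2, u q) * derivFst u q * derivSnd u q

/-- The Euler-Lagrange expression `∂_t (∂L/∂u_t) + ∂_r (∂L/∂u_r) - ∂L/∂u` of the Lagrangian density
`L = A(r, u) (u_t² - u_r²) / 2 - V(r, u)`, with the total derivatives expanded. -/
noncomputable def eulerLagrange (A V u : ℝ × ℝ → ℝ) (q : ℝ × ℝ) : ℝ :=
  A (q.2, u q) * (derivFst (derivFst u) q - derivSnd (derivSnd u) q)
    - derivFst A (q.2, u q) * derivSnd u q
    + derivSnd A (q.2, u q) * (derivFst u q ^ 2 - derivSnd u q ^ 2) / 2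
    + derivSnd V (q.2, u q)

variable {A V u : ℝ × ℝ → ℝ} {q : ℝ × ℝ}

lemma derivFst_energyDensity (hA : DifferentiableAt ℝ A (q.2, u q))
    (hV : DifferentiableAt ℝ V (q.2, u q)) (hu : ContDiffAt ℝ 2 u q) :
    derivFst (energyDensity A V u) q =
      derivSnd A (q.2, u q) * derivFst u q * (derivFst u q ^ 2 + derivSnd u q ^ 2) / 2
        + A (q.2, u q) * (derivFst u q * derivFst (derivFst u) q
          + derivSnd u q * derivFst (derivSnd u) q)
        + derivSnd V (q.2, u q) * derivFst u q := by
  have hu_t := hasDerivAt_derivFst (hu.differentiableAt (by simp))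
  have hut_t := hasDerivAt_derivFst (hasFDerivAt_derivFst hu).differentiableAt
  have hur_t := hasDerivAt_derivFst (hasFDerivAt_derivSnd hu).differentiableAt
  have hA_t := hasDerivAt_comp_prodMk hA (hasDerivAt_const q.1 q.2) hu_t
  have hV_t := hasDerivAt_comp_prodMk hV (hasDerivAt_const q.1 q.2) hu_t
  have he := ((hA_t.mul ((hut_t.pow 2).add (hur_t.pow 2))).div_const 2).add hV_t
  refine he.deriv.trans ?_
  simp only [smul_eq_mul, Pi.add_apply, Pi.pow_apply, Prod.mk.eta]
  ring

lemma derivSnd_energyFlux (hA : DifferentiableAt ℝ A (q.2, u q)) (hu : ContDiffAt ℝ 2 u q) :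
    derivSnd (energyFlux A u) q =
      -(derivFst A (q.2, u q) + derivSnd A (q.2, u q) * derivSnd u q)
          * derivFst u q * derivSnd u q
        - A (q.2, u q) * (derivSnd (derivFst u) q * derivSnd u q
          + derivFst u q * derivSnd (derivSnd u) q) := by
  have hu_r := hasDerivAt_derivSnd (hu.differentiableAt (by simp))
  have hut_r := hasDerivAt_derivSnd (hasFDerivAt_derivFst hu).differentiableAt
  have hur_r := hasDerivAt_derivSnd (hasFDerivAt_derivSnd hu).differentiableAt
  have hA_r := hasDerivAt_comp_prodMk hA (hasDerivAt_id q.2) hu_r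
  have hp := (hA_r.neg.mul hut_r).mul hur_r
  refine hp.deriv.trans ?_
  simp only [smul_eq_mul, Pi.mul_apply, Pi.neg_apply, id_eq, Prod.mk.eta]
  ring

theorem derivFst_energyDensity_add_derivSnd_energyFlux (hA : DifferentiableAt ℝ A (q.2, u q))
    (hV : DifferentiableAt ℝ V (q.2, u q)) (hu : ContDiffAt ℝ 2 u q) :
    derivFst (energyDensity A V u) q + derivSnd (energyFlux A u) q =
      derivFst u q * eulerLagrange A V u q := by
  have hmixed : derivSnd (derivFst u) q = derivFst (derivSnd u) q :=
    derivSnd_derivFst_comm (by simpa using hu)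
  rw [derivFst_energyDensity hA hV hu, derivSnd_energyFlux hA hu, hmixed, eulerLagrange]
  ring

end EnergyBalance

section Faddeev

/-- The coefficient `A(r, u)` in the Lagrangian density `A(r, u) (u_t² - u_r²) / 2 - V(r, u)` of the
equivariant Faddeev model, at `x = (r, u)`. -/
noncomputable def faddeevKinetic (x : ℝ × ℝ) : ℝ :=
  x.1 * (1 + Real.sin x.2 ^ 2 / x.1 ^ 2)

/-- The potential `V(r, u)` in the Lagrangian density `A(r, u) (u_t² - u_r²) / 2 - V(r, u)` of the
equivariant Faddeev model, at `x = (r, u)`. -/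
noncomputable def faddeevPotential (x : ℝ × ℝ) : ℝ :=
  x.1 * (Real.sin x.2 ^ 2 / (2 * x.1 ^ 2))

variable {x : ℝ × ℝ}

lemma differentiableAt_faddeevKinetic (hx : x.1 ≠ 0) : DifferentiableAt ℝ faddeevKinetic x := by
  unfold faddeevKinetic
  fun_prop (disch := positivity)

lemma differentiableAt_faddeevPotential (hx : x.1 ≠ 0) :
    DifferentiableAt ℝ faddeevPotential x := by
  unfold faddeevPotential
  fun_prop (disch := positivity)

lemma derivFst_faddeevKinetic (hx : x.1 ≠ 0) :
    derivFst faddeevKinetic x = 1 - Real.sin x.2 ^ 2 / x.1 ^ 2 := by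
  have hquot := (hasDerivAt_const x.1 (Real.sin x.2 ^ 2)).div (hasDerivAt_pow 2 x.1)
    (pow_ne_zero 2 hx)
  refine ((hasDerivAt_id x.1).mul (hquot.const_add 1)).deriv.trans ?_
  simp only [id_eq, Pi.div_apply]
  field_simp
  ring

lemma hasDerivAt_sin_sq (v : ℝ) :
    HasDerivAt (fun w => Real.sin w ^ 2) (Real.sin (2 * v)) v := by
  simpa [Real.sin_two_mul] using (Real.hasDerivAt_sin v).fun_pow 2

lemma derivSnd_faddeevKinetic (x : ℝ × ℝ) :
    derivSnd faddeevKinetic x = Real.sin (2 * x.2) / x.1 := by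
  have hA := (((hasDerivAt_sin_sq x.2).div_const (x.1 ^ 2)).const_add 1).const_mul x.1
  refine hA.deriv.trans ?_
  field_simp

lemma derivSnd_faddeevPotential (x : ℝ × ℝ) :
    derivSnd faddeevPotential x = Real.sin (2 * x.2) / (2 * x.1) := by
  have hV := ((hasDerivAt_sin_sq x.2).div_const (2 * x.1 ^ 2)).const_mul x.1
  refine hV.deriv.trans ?_
  field_simp

lemma eulerLagrange_faddeev {q : ℝ × ℝ} (hq : q.2 ≠ 0) (u : ℝ × ℝ → ℝ) :
    eulerLagrange faddeevKinetic faddeevPotential u q =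
      q.2 * ((1 + Real.sin (u q) ^ 2 / q.2 ^ 2)
            * (derivFst (derivFst u) q - derivSnd (derivSnd u) q)
          - (1 - Real.sin (u q) ^ 2 / q.2 ^ 2) * derivSnd u q / q.2
          + Real.sin (2 * u q) / (2 * q.2 ^ 2)
            * (1 + derivFst u q ^ 2 - derivSnd u q ^ 2)) := by
  rw [eulerLagrange, derivFst_faddeevKinetic hq, derivSnd_faddeevKinetic,
    derivSnd_faddeevPotential, faddeevKinetic]
  field_simp
  ring

end Faddeev

theorem stmt_0_general
    (u ut ur utt urr : ℝ × ℝ → ℝ)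
    (hut : ∀ q : ℝ × ℝ, ut q = deriv (fun t => u (t, q.2)) q.1)
    (hur : ∀ q : ℝ × ℝ, ur q = deriv (fun r => u (q.1, r)) q.2)
    (hutt : ∀ q : ℝ × ℝ, utt q = deriv (fun t => ut (t, q.2)) q.1)
    (hurr : ∀ q : ℝ × ℝ, urr q = deriv (fun r => ur (q.1, r)) q.2)
    (e p : ℝ × ℝ → ℝ)
    (he : ∀ q : ℝ × ℝ, e q =
      q.2 * ((1 + Real.sin (u q) ^ 2 / q.2 ^ 2) * (ut q ^ 2 + ur q ^ 2) / 2
        + Real.sin (u q) ^ 2 / (2 * q.2 ^ 2)))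
    (hp : ∀ q : ℝ × ℝ, p q = -q.2 * (1 + Real.sin (u q) ^ 2 / q.2 ^ 2) * ut q * ur q)
    {q : ℝ × ℝ} (hq : q.2 ≠ 0) (hu : ContDiffAt ℝ 2 u q) :
    deriv (fun t => e (t, q.2)) q.1 + deriv (fun r => p (q.1, r)) q.2 =
      ut q * (q.2 * ((1 + Real.sin (u q) ^ 2 / q.2 ^ 2) * (utt q - urr q)
        - (1 - Real.sin (u q) ^ 2 / q.2 ^ 2) * ur q / q.2
        + Real.sin (2 * u q) / (2 * q.2 ^ 2) * (1 + ut q ^ 2 - ur q ^ 2))) := by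
  obtain rfl : ut = derivFst u := funext hut
  obtain rfl : ur = derivSnd u := funext hur
  obtain rfl : utt = derivFst (derivFst u) := funext hutt
  obtain rfl : urr = derivSnd (derivSnd u) := funext hurr
  obtain rfl : e = energyDensity faddeevKinetic faddeevPotential u :=
    funext fun q => by rw [he, energyDensity, faddeevKinetic, faddeevPotential]; ring
  obtain rfl : p = energyFlux faddeevKinetic u :=
    funext fun q => by rw [hp, energyFlux, faddeevKinetic]; ring
  rw [← eulerLagrange_faddeev hq]
  exact derivFst_energyDensity_add_derivSnd_energyFlux (differentiableAt_faddeevKinetic hq)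
    (differentiableAt_faddeevPotential hq) hu

/-- Local energy conservation for the (2+1)-dimensional equivariant Faddeev model:
if `u` is `C²` on an open set `Ω ⊆ ℝ × (0,∞)` and satisfies the equivariant Faddeev
equation there, then the energy density `e` and the flux `p` satisfy `∂ₜ e + ∂ᵣ p = 0`
at every point of `Ω`. -/
theorem stmt_0
    (Ω : Set (ℝ × ℝ)) (hΩopen : IsOpen Ω) (hΩpos : ∀ q ∈ Ω, 0 < q.2)
    (u ut ur utt urr : ℝ × ℝ → ℝ)
    (hu : ContDiffOn ℝ 2 u Ω)
    (hut : ∀ q : ℝ × ℝ, ut q = deriv (fun t => u (t, q.2)) q.1)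
    (hur : ∀ q : ℝ × ℝ, ur q = deriv (fun r => u (q.1, r)) q.2)
    (hutt : ∀ q : ℝ × ℝ, utt q = deriv (fun t => ut (t, q.2)) q.1)
    (hurr : ∀ q : ℝ × ℝ, urr q = deriv (fun r => ur (q.1, r)) q.2)
    (heq : ∀ q ∈ Ω,
      (1 + Real.sin (u q) ^ 2 / q.2 ^ 2) * (utt q - urr q)
        - (1 - Real.sin (u q) ^ 2 / q.2 ^ 2) * ur q / q.2
        + Real.sin (2 * u q) / (2 * q.2 ^ 2) * (1 + ut q ^ 2 - ur q ^ 2) = 0)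
    (e p : ℝ × ℝ → ℝ)
    (he : ∀ q : ℝ × ℝ, e q =
      q.2 * ((1 + Real.sin (u q) ^ 2 / q.2 ^ 2) * (ut q ^ 2 + ur q ^ 2) / 2
        + Real.sin (u q) ^ 2 / (2 * q.2 ^ 2)))
    (hp : ∀ q : ℝ × ℝ, p q = -q.2 * (1 + Real.sin (u q) ^ 2 / q.2 ^ 2) * ut q * ur q) :
    ∀ q ∈ Ω, deriv (fun t => e (t, q.2)) q.1 + deriv (fun r => p (q.1, r)) q.2 = 0 := by
  intro q hq
  rw [stmt_0_general u ut ur utt urr hut hur hutt hurr e p he hp (hΩpos q hq).ne'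
    (hu.contDiffAt (hΩopen.mem_nhds hq)), heq q hq, mul_zero, mul_zero]
end

section
/- Let u : [0,∞) → ℝ be continuous, continuously differentiable on (0,∞), with u(0) = kπ for some integer k, and let R > 0; assume s ↦ |sin(u(s))|·|u'(s)| is integrable on (0,R). Then, with I(w) := ∫₀^w |sin z| dz, one has I(|u(R) − u(0)|) ≤ ∫₀^R |sin(u(s))|·|u'(s)| ds, and consequently both I(|u(R) − u(0)|) ≤ (∫₀^R (sin²(u(s))/s²)·s ds)^{1/2} · (∫₀^R u'(s)²·s ds)^{1/2} and I(|u(R) − u(0)|) ≤ (∫₀^R (sin²(u(s))·u'(s)²/s²)·s ds)^{1/2} · (R²/2)^{1/2}. -/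
open MeasureTheory

/-!
Since `|sin|` is even and `u 0 ∈ πℤ` is one of its periods, `I |u R - u 0|` is the absolute value of
`∫ z in u 0..u R, |sin z|`. The substitution `z = u s` bounds it by the integral of `|sin u| * |u'|`
over `(0, R)`. The other two bounds are the Cauchy–Schwarz inequality with weight `s`, applied to
the products `sin u * u'` and `(sin u * u') * 1`.
-/

section Integral

variable {E : Type*} [NormedAddCommGroup E] [NormedSpace ℝ E]

lemma norm_integral_zero_abs_of_even {f : ℝ → E} (hf : f.Even) (w : ℝ) :
    ‖∫ z in (0 : ℝ)..|w|, f z‖ = ‖∫ z in (0 : ℝ)..w, f z‖ := by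
  have integral_neg : ∫ z in (0 : ℝ)..-w, f z = -∫ z in (0 : ℝ)..w, f z := by
    rw [← intervalIntegral.integral_symm]
    simpa only [hf _, neg_neg, neg_zero] using
      (intervalIntegral.integral_comp_neg f (a := w) (b := 0)).symm
  rcases abs_choice w with h | h
  · rw [h]
  · rw [h, integral_neg, norm_neg]

lemma integral_zero_sub_of_periodic {f : ℝ → E} {a : ℝ} (hf : f.Periodic a) (b : ℝ) :
    ∫ z in (0 : ℝ)..(b - a), f z = ∫ z in a..b, f z := by
  simpa only [hf _, zero_add, sub_add_cancel] using
    intervalIntegral.integral_comp_add_right f a (a := 0) (b := b - a)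

lemma enorm_integral_le_lintegral_enorm_deriv_smul_comp {u : ℝ → ℝ} {g : ℝ → E} {a b : ℝ}
    (hab : a ≤ b) (hu : ContinuousOn u (Set.Icc a b)) (hu' : DifferentiableOn ℝ u (Set.Ioo a b))
    (hg : ContinuousOn g (u '' Set.Icc a b)) :
    ‖∫ z in u a..u b, g z‖ₑ ≤ ∫⁻ s in Set.Ioo a b, ‖deriv u s • g (u s)‖ₑ := by
  by_cases hfin : ∫⁻ s in Set.Ioo a b, ‖deriv u s • g (u s)‖ₑ = ⊤
  · exact hfin ▸ le_top
  have hmeas : AEStronglyMeasurable (fun s => deriv u s • g (u s))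
      (volume.restrict (Set.Ioo a b)) :=
    (measurable_deriv u).aestronglyMeasurable.smul
      (((hg.comp hu (Set.mapsTo_image u _)).mono
        Set.Ioo_subset_Icc_self).aestronglyMeasurable measurableSet_Ioo)
  have hint : IntegrableOn (fun s => deriv u s • g (u s)) (Set.Icc a b) :=
    (integrableOn_Icc_iff_integrableOn_Ioo ..).2 ⟨hmeas, lt_top_iff_ne_top.2 hfin⟩
  have hderiv : ∀ s ∈ Set.Ioo (min a b) (max a b),
      HasDerivWithinAt u (deriv u s) (Set.Ioi s) s := by
    rw [min_eq_left hab, max_eq_right hab]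
    exact fun s hs =>
      (hu'.differentiableAt (isOpen_Ioo.mem_nhds hs)).hasDerivAt.hasDerivWithinAt
  rw [← Set.uIcc_of_le hab] at hu hg hint
  have substitution : ∫ s in a..b, deriv u s • g (u s) = ∫ z in u a..u b, g z :=
    intervalIntegral.integral_deriv_smul_comp''' hu hderiv
      (hg.mono (Set.image_mono Set.Ioo_subset_Icc_self))
      (hg.integrableOn_compact (isCompact_uIcc.image_of_continuousOn hu)) hint
  rw [← substitution, intervalIntegral.integral_of_le hab, integral_Ioc_eq_integral_Ioo]
  exact enorm_integral_le_lintegral_enorm _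

end Integral

lemma lintegral_enorm_mul_le_weighted {α : Type*} [MeasurableSpace α] {μ : Measure α}
    {f g w : α → ℝ} (hf : AEMeasurable f μ) (hg : AEMeasurable g μ) (hw : AEMeasurable w μ)
    (hw_pos : ∀ᵐ s ∂μ, 0 < w s) :
    ∫⁻ s, ‖f s * g s‖ₑ ∂μ ≤
      (∫⁻ s, ENNReal.ofReal (f s ^ 2 / w s) ∂μ) ^ (1 / 2 : ℝ) *
        (∫⁻ s, ENNReal.ofReal (g s ^ 2 * w s) ∂μ) ^ (1 / 2 : ℝ) := by
  have enorm_rpow_two (x : ℝ) : ‖x‖ₑ ^ (2 : ℝ) = ENNReal.ofReal (x ^ 2) := by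
    rw [ENNReal.rpow_two, ← enorm_pow, Real.enorm_of_nonneg (sq_nonneg x)]
  calc ∫⁻ s, ‖f s * g s‖ₑ ∂μ
      = ∫⁻ s, ‖f s / √(w s)‖ₑ * ‖g s * √(w s)‖ₑ ∂μ := by
        refine lintegral_congr_ae (hw_pos.mono fun s hs => ?_)
        have := Real.sqrt_pos.2 hs
        dsimp only
        rw [← enorm_mul]
        congr 1
        field_simp
    _ ≤ (∫⁻ s, ‖f s / √(w s)‖ₑ ^ (2 : ℝ) ∂μ) ^ (1 / 2 : ℝ) *
          (∫⁻ s, ‖g s * √(w s)‖ₑ ^ (2 : ℝ) ∂μ) ^ (1 / 2 : ℝ) :=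
        ENNReal.lintegral_mul_le_Lp_mul_Lq μ Real.HolderConjugate.two_two
          (hf.div hw.sqrt).enorm (hg.mul hw.sqrt).enorm
    _ = _ := by
        congr 2 <;> refine lintegral_congr_ae (hw_pos.mono fun s hs => ?_)
        · simp only [enorm_rpow_two, div_pow, Real.sq_sqrt hs.le]
        · simp only [enorm_rpow_two, mul_pow, Real.sq_sqrt hs.le]

lemma lintegral_ofReal_id_Ioo {a b : ℝ} (ha : 0 ≤ a) (hab : a ≤ b) :
    ∫⁻ s in Set.Ioo a b, ENNReal.ofReal s = ENNReal.ofReal ((b ^ 2 - a ^ 2) / 2) := by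
  have hint : IntegrableOn (fun s : ℝ => s) (Set.Ioo a b) :=
    continuous_id.integrableOn_Icc.mono_set Set.Ioo_subset_Icc_self
  rw [← ofReal_integral_eq_lintegral_ofReal hint
      (ae_restrict_of_forall_mem measurableSet_Ioo fun s hs => ha.trans hs.1.le),
    ← integral_Ioc_eq_integral_Ioo, ← intervalIntegral.integral_of_le hab, integral_id]

lemma ofReal_integral_abs_sin_le_lintegral {u : ℝ → ℝ} {k : ℤ} {a b : ℝ} (hab : a ≤ b)
    (hu : ContinuousOn u (Set.Icc a b)) (hu' : DifferentiableOn ℝ u (Set.Ioo a b))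
    (hua : u a = k * Real.pi) :
    ENNReal.ofReal (∫ z in (0 : ℝ)..|u b - u a|, |Real.sin z|) ≤
      ∫⁻ s in Set.Ioo a b, ‖Real.sin (u s) * deriv u s‖ₑ := by
  have even_abs_sin : Function.Even fun z => |Real.sin z| := fun z => by
    simp only [Real.sin_neg, abs_neg]
  have periodic_abs_sin : Function.Periodic (fun z => |Real.sin z|) (u a) := fun z => by
    simp only [hua, Real.sin_add_int_mul_pi, abs_mul, abs_zpow, abs_neg, abs_one, one_zpow,
      one_mul]
  calc ENNReal.ofReal (∫ z in (0 : ℝ)..|u b - u a|, |Real.sin z|)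
      ≤ ‖∫ z in (0 : ℝ)..|u b - u a|, |Real.sin z|‖ₑ := Real.ofReal_le_enorm _
    _ = ‖∫ z in u a..u b, |Real.sin z|‖ₑ := by
        rw [← ofReal_norm, norm_integral_zero_abs_of_even even_abs_sin,
          integral_zero_sub_of_periodic periodic_abs_sin, ofReal_norm]
    _ ≤ ∫⁻ s in Set.Ioo a b, ‖deriv u s • |Real.sin (u s)|‖ₑ :=
        enorm_integral_le_lintegral_enorm_deriv_smul_comp hab hu hu'
          Real.continuous_sin.abs.continuousOn
    _ = ∫⁻ s in Set.Ioo a b, ‖Real.sin (u s) * deriv u s‖ₑ := by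
        simp only [smul_eq_mul, enorm_mul, Real.enorm_abs, mul_comm]

theorem stmt_2_general (u : ℝ → ℝ) (k : ℤ) (R : ℝ) (hR : 0 ≤ R)
    (hu_cont : ContinuousOn u (Set.Icc 0 R))
    (hu_diff : DifferentiableOn ℝ u (Set.Ioo 0 R))
    (hu0 : u 0 = (k : ℝ) * Real.pi)
    (I : ℝ → ℝ) (hI : ∀ w, I w = ∫ z in (0 : ℝ)..w, |Real.sin z|) :
    (IntegrableOn (fun s => |Real.sin (u s)| * |deriv u s|) (Set.Ioo 0 R) →
      I |u R - u 0| ≤ ∫ s in Set.Ioo (0 : ℝ) R, |Real.sin (u s)| * |deriv u s|) ∧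
    ENNReal.ofReal (I |u R - u 0|) ≤
      (∫⁻ s in Set.Ioo (0 : ℝ) R, ENNReal.ofReal (Real.sin (u s) ^ 2 / s ^ 2 * s)) ^ (1/2 : ℝ) *
        (∫⁻ s in Set.Ioo (0 : ℝ) R, ENNReal.ofReal ((deriv u s) ^ 2 * s)) ^ (1/2 : ℝ) ∧
    ENNReal.ofReal (I |u R - u 0|) ≤
      (∫⁻ s in Set.Ioo (0 : ℝ) R,
          ENNReal.ofReal (Real.sin (u s) ^ 2 * (deriv u s) ^ 2 / s ^ 2 * s)) ^ (1/2 : ℝ) *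
        ENNReal.ofReal (R ^ 2 / 2) ^ (1/2 : ℝ) := by
  have hbound : ENNReal.ofReal (I |u R - u 0|) ≤
      ∫⁻ s in Set.Ioo 0 R, ‖Real.sin (u s) * deriv u s‖ₑ :=
    hI _ ▸ ofReal_integral_abs_sin_le_lintegral hR hu_cont hu_diff hu0
  have hsin : AEMeasurable (fun s => Real.sin (u s)) (volume.restrict (Set.Ioo 0 R)) :=
    ((hu_cont.mono Set.Ioo_subset_Icc_self).aemeasurable measurableSet_Ioo).sin
  have hderiv : AEMeasurable (deriv u) (volume.restrict (Set.Ioo 0 R)) :=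
    (measurable_deriv u).aemeasurable
  have hpos : ∀ᵐ s ∂volume.restrict (Set.Ioo 0 R), 0 < s :=
    ae_restrict_of_forall_mem measurableSet_Ioo fun s hs => hs.1
  have div_sq_mul (x s : ℝ) : x / s ^ 2 * s = x / s := by
    rcases eq_or_ne s 0 with rfl | hs
    · simp
    · field_simp
  simp only [div_sq_mul]
  refine ⟨fun hint => ?_, hbound.trans ?_, hbound.trans ?_⟩
  · simp only [← abs_mul] at hint ⊢
    rwa [← ENNReal.ofReal_le_ofReal_iff (integral_nonneg fun s => abs_nonneg _),
      ofReal_integral_eq_lintegral_ofReal hint (.of_forall fun s => abs_nonneg _),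
      ← lintegral_congr fun s => Real.enorm_eq_ofReal_abs _]
  · exact lintegral_enorm_mul_le_weighted hsin hderiv aemeasurable_id hpos
  · simpa only [Pi.mul_apply, id, mul_one, mul_pow, one_pow, one_mul,
      lintegral_ofReal_id_Ioo le_rfl hR, zero_pow two_ne_zero, sub_zero] using
      lintegral_enorm_mul_le_weighted (hsin.mul hderiv) (aemeasurable_const (b := 1))
        aemeasurable_id hpos

/-- The fundamental-theorem-of-calculus / Cauchy–Schwarz estimates for
`I(w) = ∫₀^w |sin z| dz` applied to an equivariant configuration `u`. -/
theorem stmt_2 (u : ℝ → ℝ) (k : ℤ) (R : ℝ) (hR : 0 < R)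
    (hu_cont : ContinuousOn u (Set.Ici 0))
    (hu_diff : ContDiffOn ℝ 1 u (Set.Ioi 0))
    (hu0 : u 0 = (k : ℝ) * Real.pi)
    (hint : IntegrableOn (fun s => |Real.sin (u s)| * |deriv u s|) (Set.Ioo 0 R))
    (I : ℝ → ℝ) (hI : ∀ w, I w = ∫ z in (0 : ℝ)..w, |Real.sin z|) :
    I |u R - u 0| ≤ (∫ s in Set.Ioo (0 : ℝ) R, |Real.sin (u s)| * |deriv u s|) ∧
    ENNReal.ofReal (I |u R - u 0|) ≤
      (∫⁻ s in Set.Ioo (0 : ℝ) R, ENNReal.ofReal (Real.sin (u s) ^ 2 / s ^ 2 * s)) ^ (1/2 : ℝ) *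
        (∫⁻ s in Set.Ioo (0 : ℝ) R, ENNReal.ofReal ((deriv u s) ^ 2 * s)) ^ (1/2 : ℝ) ∧
    ENNReal.ofReal (I |u R - u 0|) ≤
      (∫⁻ s in Set.Ioo (0 : ℝ) R,
          ENNReal.ofReal (Real.sin (u s) ^ 2 * (deriv u s) ^ 2 / s ^ 2 * s)) ^ (1/2 : ℝ) *
        ENNReal.ofReal (R ^ 2 / 2) ^ (1/2 : ℝ) := by
  refine (stmt_2_general u k R hR.le ?_ ?_ hu0 I hI).imp_left (· hint)
  · exact hu_cont.mono Set.Icc_subset_Ici_self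
  · exact (hu_diff.differentiableOn one_ne_zero).mono Set.Ioo_subset_Ioi_self
end

section
/- For every r > 0 and every w ∈ ℝ, setting A = 1 + sin²(w)/r², the following identity holds: (1/2)·A^{−1/2}·(2cos(2w)/r² + 4sin²(w)/r⁴) − (1/4)·A^{−3/2}·(sin²(2w)/r⁴ + 4sin⁴(w)/r⁶) = A^{1/2}/r² − A^{1/2} + A^{−3/2}. (Here 2cos(2w)/r² + 4sin²(w)/r⁴ = ∂_w²A + ∂_r²A + (∂_r A)/r and sin²(2w)/r⁴ + 4sin⁴(w)/r⁶ = (∂_w A)² + (∂_r A)², so this is the integrand identity underlying the wave equation satisfied by Φ₁.) -/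
/-!
On functions of `w` and the polar radius `r`, write `Δ = ∂_w² + ∂_r² + r⁻¹ ∂_r` and
`|∇A|² = (∂_w A)² + (∂_r A)²`. By the chain rule the left-hand side of the identity,
`½ A^{-1/2} ΔA - ¼ A^{-3/2} |∇A|²`, is `Δ(A^{1/2})`. Since `sin² w = r² (A - 1)`, both `ΔA` and
`|∇A|²` are polynomials in `A` and `r⁻²`; factoring out `A^{-3/2}` leaves the polynomial identity
`½ A ΔA - ¼ |∇A|² = A² / r² - A² + 1`.
-/

section RpowFactorization

variable {x : ℝ}

lemma rpow_neg_half_eq_rpow_neg_three_halves_mul (hx : x ≠ 0) :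
    x ^ (-(1 / 2) : ℝ) = x ^ (-(3 / 2) : ℝ) * x := by
  rw [← Real.rpow_add_one hx]
  norm_num

lemma rpow_half_eq_rpow_neg_three_halves_mul_sq (hx : x ≠ 0) :
    x ^ (1 / 2 : ℝ) = x ^ (-(3 / 2) : ℝ) * x ^ 2 := by
  rw [← Real.rpow_add_natCast hx]
  norm_num

lemma half_rpow_mul_sub_quarter_rpow_mul (hx : x ≠ 0) (p q : ℝ) :
    (1 / 2) * x ^ (-(1 / 2) : ℝ) * p - (1 / 4) * x ^ (-(3 / 2) : ℝ) * q
      = x ^ (-(3 / 2) : ℝ) * ((1 / 2) * x * p - (1 / 4) * q) := by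
  rw [rpow_neg_half_eq_rpow_neg_three_halves_mul hx]
  ring

end RpowFactorization

section Trigonometry

lemma sin_two_mul_sq (w : ℝ) :
    Real.sin (2 * w) ^ 2 = 4 * Real.sin w ^ 2 * (1 - Real.sin w ^ 2) := by
  rw [Real.sin_two_mul, mul_pow, Real.cos_sq']
  ring

variable {r w A : ℝ}

lemma sin_sq_eq_sq_mul_sub_one (hr : r ≠ 0) (hA : A = 1 + Real.sin w ^ 2 / r ^ 2) :
    Real.sin w ^ 2 = r ^ 2 * (A - 1) := by
  rw [hA]
  field_simp
  ring

-- The left-hand side is `ΔA`.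
lemma laplacian_eq_of_sin_sq_eq (hr : r ≠ 0) (hsin : Real.sin w ^ 2 = r ^ 2 * (A - 1)) :
    2 * Real.cos (2 * w) / r ^ 2 + 4 * Real.sin w ^ 2 / r ^ 4
      = 2 * (2 * A - 1) / r ^ 2 - 4 * (A - 1) := by
  rw [Real.cos_two_mul_eq_one_sub, hsin]
  field_simp
  ring

-- The left-hand side is `|∇A|²`.
lemma gradient_sq_eq_of_sin_sq_eq (hr : r ≠ 0) (hsin : Real.sin w ^ 2 = r ^ 2 * (A - 1)) :
    Real.sin (2 * w) ^ 2 / r ^ 4 + 4 * Real.sin w ^ 4 / r ^ 6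
      = 4 * (A - 1) * (A / r ^ 2 - (A - 1)) := by
  have hsin4 : Real.sin w ^ 4 = (r ^ 2 * (A - 1)) ^ 2 := by
    rw [← hsin, ← pow_mul]
  rw [sin_two_mul_sq, hsin4, hsin]
  field_simp
  ring

lemma half_mul_laplacian_sub_quarter_gradient_sq (hr : r ≠ 0)
    (hA : A = 1 + Real.sin w ^ 2 / r ^ 2) :
    (1 / 2) * A * (2 * Real.cos (2 * w) / r ^ 2 + 4 * Real.sin w ^ 2 / r ^ 4)
        - (1 / 4) * (Real.sin (2 * w) ^ 2 / r ^ 4 + 4 * Real.sin w ^ 4 / r ^ 6)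
      = A ^ 2 / r ^ 2 - A ^ 2 + 1 := by
  have hsin := sin_sq_eq_sq_mul_sub_one hr hA
  rw [laplacian_eq_of_sin_sq_eq hr hsin, gradient_sq_eq_of_sin_sq_eq hr hsin]
  ring

end Trigonometry

/-- The integrand identity underlying the wave equation satisfied by `Φ₁`:
for `r > 0`, `w ∈ ℝ` and `A = 1 + sin²w / r²`,
`½ A^{-1/2}(2cos 2w/r² + 4sin²w/r⁴) - ¼ A^{-3/2}(sin²2w/r⁴ + 4sin⁴w/r⁶)
  = A^{1/2}/r² - A^{1/2} + A^{-3/2}`. -/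
theorem stmt_5 (r w A : ℝ) (hr : 0 < r) (hA : A = 1 + Real.sin w ^ 2 / r ^ 2) :
    (1 / 2) * A ^ (-(1 / 2) : ℝ) *
        (2 * Real.cos (2 * w) / r ^ 2 + 4 * Real.sin w ^ 2 / r ^ 4)
      - (1 / 4) * A ^ (-(3 / 2) : ℝ) *
        (Real.sin (2 * w) ^ 2 / r ^ 4 + 4 * Real.sin w ^ 4 / r ^ 6)
    = A ^ ((1 / 2) : ℝ) / r ^ 2 - A ^ ((1 / 2) : ℝ) + A ^ (-(3 / 2) : ℝ) := by
  have hA_ne : A ≠ 0 := by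
    rw [hA]
    positivity
  rw [half_rpow_mul_sub_quarter_rpow_mul hA_ne,
    half_mul_laplacian_sub_quarter_gradient_sq hr.ne' hA,
    rpow_half_eq_rpow_neg_three_halves_mul_sq hA_ne]
  ring
end

section
/- Let Ω ⊆ ℝ × (0,∞) be open, let N₁ be an integer, and let u : ℝ × ℝ → ℝ be twice continuously differentiable on Ω and satisfy the (2+1)-dimensional equivariant Faddeev equation at every point of Ω. Define Φ₁(t,r) = ∫_{N₁π}^{u(t,r)} (1 + sin²(w)/r²)^{1/2} dw. Then at every point of Ω, ∂_t²Φ₁ − ∂_r²Φ₁ − (1/r)∂_rΦ₁ = −Φ₁/r² + ∫_{N₁π}^{u(t,r)} [A^{1/2} − A^{−3/2}] dw, where A = A(r,w) = 1 + sin²(w)/r². -/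
/-!
For any smooth weight `W(r, w)`, the wave operator applied to `Φ = ∫_a^u W(r, w) dw` equals
`W (u_tt - u_rr - u_r/r) + W_w (u_t² - u_r²) - 2 W_r u_r - ∫_a^u (W_rr + W_r/r) dw`.
The weight `W = √A` satisfies the elliptic equation `W_ww + W_rr + W_r/r = W/r² - (W - W⁻³)`, so
the last integral is `Φ/r² - ∫_a^u (W - W⁻³) dw` up to the boundary terms of `∫ W_ww`. The boundary
term at `a` vanishes when `sin (2a) = 0`, and the one at `u` completes the local terms to the
Faddeev operator of `u` divided by `W`.
-/

open Set Filter Topology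
open scoped Interval

section LeibnizRule

variable {E : Type*} [NormedAddCommGroup E] [NormedSpace ℝ E]
  {f f' : ℝ → ℝ → E} {U : Set ℝ} {v : ℝ → ℝ} {a b x₀ v' : ℝ}

theorem hasDerivAt_intervalIntegral_of_continuousOn_deriv (hU : U ∈ 𝓝 x₀)
    (hf : ∀ x ∈ U, ContinuousOn (f x) [[a, b]])
    (hf' : ContinuousOn (Function.uncurry f') (U ×ˢ [[a, b]]))
    (hd : ∀ x ∈ U, ∀ w ∈ [[a, b]], HasDerivAt (f · w) (f' x w) x) :
    HasDerivAt (fun x => ∫ w in a..b, f x w) (∫ w in a..b, f' x₀ w) x₀ := by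
  obtain ⟨K, hK, hKU, hKc⟩ := local_compact_nhds hU
  obtain ⟨C, hC⟩ := (hKc.prod isCompact_uIcc).exists_bound_of_continuousOn
    (hf'.mono (prod_mono_left hKU))
  have hf'₀ : ContinuousOn (f' x₀) [[a, b]] :=
    hf'.comp (f := fun w => (x₀, w)) (by fun_prop) fun w hw => ⟨mem_of_mem_nhds hU, hw⟩
  have aestronglyMeasurable {g : ℝ → E} (hg : ContinuousOn g [[a, b]]) :
      MeasureTheory.AEStronglyMeasurable g (MeasureTheory.volume.restrict (Ι a b)) :=
    (hg.mono uIoc_subset_uIcc).aestronglyMeasurable measurableSet_uIoc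
  refine (intervalIntegral.hasDerivAt_integral_of_dominated_loc_of_deriv_le
    (bound := fun _ => C) hK ?_ (hf x₀ (mem_of_mem_nhds hU)).intervalIntegrable
    (aestronglyMeasurable hf'₀) ?_ intervalIntegrable_const ?_).2
  · filter_upwards [hU] with x hx using aestronglyMeasurable (hf x hx)
  · exact .of_forall fun w hw x hx => hC (x, w) ⟨hx, uIoc_subset_uIcc hw⟩
  · exact .of_forall fun w hw x hx => hd x (hKU hx) w (uIoc_subset_uIcc hw)

variable [CompleteSpace E]

theorem isLittleO_intervalIntegral_sub_smul
    (hf : ∀ᶠ x in 𝓝 x₀, Continuous (f x)) (hf₀ : ContinuousAt (Function.uncurry f) (x₀, v x₀))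
    (hv : ContinuousAt v x₀) :
    (fun x => (∫ w in v x₀..v x, f x w) - (v x - v x₀) • f x₀ (v x₀))
      =o[𝓝 x₀] fun x => v x - v x₀ := by
  rw [Asymptotics.isLittleO_iff]
  intro c hc
  have hclose : ∀ᶠ p : ℝ × ℝ in 𝓝 x₀ ×ˢ 𝓝 (v x₀), dist (f p.1 p.2) (f x₀ (v x₀)) < c := by
    rw [← nhds_prod_eq]
    exact Metric.tendsto_nhds.1 hf₀ c hc
  filter_upwards [hf, Eventually.segment_of_prod_nhds
    (r := fun x w => dist (f x w) (f x₀ (v x₀)) < c) tendsto_const_nhds hv hclose] with x hfx hx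
  rw [segment_eq_uIcc] at hx
  rw [← intervalIntegral.integral_const, ← intervalIntegral.integral_sub
    (hfx.intervalIntegrable _ _) intervalIntegrable_const]
  refine intervalIntegral.norm_integral_le_of_norm_le_const fun w hw => ?_
  rw [← dist_eq_norm]
  exact (hx w (uIoc_subset_uIcc hw)).le

theorem hasDerivAt_intervalIntegral_of_hasDerivAt_right {I : E}
    (hf : ∀ᶠ x in 𝓝 x₀, Continuous (f x)) (hf₀ : ContinuousAt (Function.uncurry f) (x₀, v x₀))
    (hI : HasDerivAt (fun x => ∫ w in a..v x₀, f x w) I x₀) (hv : HasDerivAt v v' x₀) :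
    HasDerivAt (fun x => ∫ w in a..v x, f x w) (v' • f x₀ (v x₀) + I) x₀ := by
  have hmove : HasDerivAt (fun x => (∫ w in v x₀..v x, f x w) - (v x - v x₀) • f x₀ (v x₀))
      0 x₀ := by
    rw [hasDerivAt_iff_isLittleO]
    simpa using (isLittleO_intervalIntegral_sub_smul hf hf₀ hv.continuousAt).trans_isBigO
      hv.isBigO_sub
  refine (((hmove.add ((hv.sub_const (v x₀)).smul_const (f x₀ (v x₀)))).add hI).congr_deriv
    (by rw [zero_add])).congr_of_eventuallyEq ?_
  filter_upwards [hf] with x hx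
  simp only [Pi.add_apply, sub_add_cancel]
  rw [add_comm, intervalIntegral.integral_add_adjacent_intervals (hx.intervalIntegrable _ _)
    (hx.intervalIntegrable _ _)]

theorem hasDerivAt_intervalIntegral_leibniz (hU : U ∈ 𝓝 x₀)
    (hf : ContinuousOn (Function.uncurry f) (U ×ˢ univ))
    (hf' : ContinuousOn (Function.uncurry f') (U ×ˢ univ))
    (hd : ∀ x ∈ U, ∀ w, HasDerivAt (f · w) (f' x w) x) (hv : HasDerivAt v v' x₀) :
    HasDerivAt (fun x => ∫ w in a..v x, f x w)
      (v' • f x₀ (v x₀) + ∫ w in a..v x₀, f' x₀ w) x₀ := by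
  have hslice (x) (hx : x ∈ U) : Continuous (f x) :=
    continuousOn_univ.1 <| hf.comp (f := fun w => (x, w)) (by fun_prop) fun w hw => ⟨hx, hw⟩
  refine hasDerivAt_intervalIntegral_of_hasDerivAt_right (mem_of_superset hU hslice)
    (hf.continuousAt (prod_mem_nhds hU univ_mem)) ?_ hv
  exact hasDerivAt_intervalIntegral_of_continuousOn_deriv hU
    (fun x hx => (hslice x hx).continuousOn) (hf'.mono (prod_mono_right (subset_univ _)))
    fun x hx w _ => hd x hx w

end LeibnizRule

namespace Faddeev

variable {r w a : ℝ}

/-- The weight `W(r, w) = A(r, w)^{1/2}`, with `A(r, w) = 1 + sin² w / r²`, in the integrand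
of `Φ₁`. -/
noncomputable def weight (r w : ℝ) : ℝ := √(1 + Real.sin w ^ 2 / r ^ 2)

/-- The partial derivative `W_r` of the weight, valid for `r ≠ 0`. -/
noncomputable def weightDr (r w : ℝ) : ℝ := -(Real.sin w ^ 2 / r ^ 3) / weight r w

/-- The partial derivative `W_w` of the weight, valid for `r ≠ 0`. -/
noncomputable def weightDw (r w : ℝ) : ℝ := Real.sin w * Real.cos w / r ^ 2 / weight r w

/-- The second partial derivative `W_rr` of the weight, valid for `r ≠ 0`, in the form obtained by
differentiating `W W_r = -sin² w / r³`. -/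
noncomputable def weightDrr (r w : ℝ) : ℝ :=
  (3 * Real.sin w ^ 2 / r ^ 4 - weightDr r w ^ 2) / weight r w

/-- The second partial derivative `W_ww` of the weight, valid for `r ≠ 0`, in the form obtained by
differentiating `W W_w = sin w cos w / r²`. -/
noncomputable def weightDww (r w : ℝ) : ℝ :=
  ((Real.cos w ^ 2 - Real.sin w ^ 2) / r ^ 2 - weightDw r w ^ 2) / weight r w

theorem weight_pos (r w : ℝ) : 0 < weight r w := Real.sqrt_pos.2 (by positivity)

theorem weight_ne_zero (r w : ℝ) : weight r w ≠ 0 := (weight_pos r w).ne'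

theorem weight_sq (r w : ℝ) : weight r w ^ 2 = 1 + Real.sin w ^ 2 / r ^ 2 :=
  Real.sq_sqrt (by positivity)

theorem sin_sq_eq_weight_sq (hr : r ≠ 0) : Real.sin w ^ 2 = (weight r w ^ 2 - 1) * r ^ 2 := by
  rw [weight_sq]
  field_simp
  ring

theorem weightDw_eq_zero_of_sin_two_mul_eq_zero (ha : Real.sin (2 * a) = 0) : weightDw r a = 0 := by
  have : Real.sin a * Real.cos a = 0 := by linarith [Real.sin_two_mul a]
  simp [weightDw, this]

theorem hasDerivAt_weight_comp {ρ v : ℝ → ℝ} {ρ' v' x : ℝ} (hρ : HasDerivAt ρ ρ' x)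
    (hv : HasDerivAt v v' x) (h₀ : ρ x ≠ 0) :
    HasDerivAt (fun x => weight (ρ x) (v x))
      (weightDr (ρ x) (v x) * ρ' + weightDw (ρ x) (v x) * v') x := by
  have hA := ((hv.sin.pow 2).div (hρ.pow 2) (pow_ne_zero 2 h₀)).const_add 1
  refine (hA.sqrt (ne_of_gt ?_)).congr_deriv ?_
  · simp only [Pi.div_apply, Pi.pow_apply]
    positivity
  · change _ / (2 * weight (ρ x) (v x)) = _
    have := weight_ne_zero (ρ x) (v x)
    simp only [weightDr, weightDw, Pi.pow_apply]
    field_simp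
    ring

theorem hasDerivAt_weight_left (hr : r ≠ 0) (w : ℝ) :
    HasDerivAt (weight · w) (weightDr r w) r := by
  simpa using hasDerivAt_weight_comp (hasDerivAt_id r) (hasDerivAt_const r w) hr

theorem hasDerivAt_weight_right (hr : r ≠ 0) (w : ℝ) :
    HasDerivAt (weight r) (weightDw r w) w := by
  simpa using hasDerivAt_weight_comp (hasDerivAt_const w r) (hasDerivAt_id w) hr

theorem hasDerivAt_weightDr (hr : r ≠ 0) (w : ℝ) :
    HasDerivAt (weightDr · w) (weightDrr r w) r := by
  have hnum : HasDerivAt (fun r : ℝ => -(Real.sin w ^ 2 / r ^ 3)) (3 * Real.sin w ^ 2 / r ^ 4)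
      r := by
    refine ((hasDerivAt_const r _).div (hasDerivAt_pow 3 r) (pow_ne_zero 3 hr)).neg.congr_deriv ?_
    field_simp
    ring
  refine (hnum.div (hasDerivAt_weight_left hr w) (weight_ne_zero r w)).congr_deriv ?_
  have := weight_ne_zero r w
  simp only [weightDrr, weightDr]
  field_simp

theorem hasDerivAt_weightDw (hr : r ≠ 0) (w : ℝ) :
    HasDerivAt (weightDw r) (weightDww r w) w := by
  have hnum := ((Real.hasDerivAt_sin w).mul (Real.hasDerivAt_cos w)).div_const (r ^ 2)
  refine (hnum.div (hasDerivAt_weight_right hr w) (weight_ne_zero r w)).congr_deriv ?_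
  have := weight_ne_zero r w
  simp only [weightDww, weightDw, Pi.mul_apply]
  field_simp
  ring

theorem continuousOn_weight : ContinuousOn (Function.uncurry weight) ({0}ᶜ ×ˢ univ) := by
  unfold Function.uncurry weight
  fun_prop (disch := rintro p ⟨hp, -⟩; exact pow_ne_zero _ hp)

theorem continuousOn_weightDr : ContinuousOn (Function.uncurry weightDr) ({0}ᶜ ×ˢ univ) := by
  refine ContinuousOn.div ?_ continuousOn_weight fun p _ => weight_ne_zero _ _
  fun_prop (disch := rintro p ⟨hp, -⟩; exact pow_ne_zero _ hp)

theorem continuousOn_weightDrr : ContinuousOn (Function.uncurry weightDrr) ({0}ᶜ ×ˢ univ) := by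
  refine ContinuousOn.div (.sub ?_ (continuousOn_weightDr.pow 2)) continuousOn_weight
    fun p _ => weight_ne_zero _ _
  fun_prop (disch := rintro p ⟨hp, -⟩; exact pow_ne_zero _ hp)

theorem continuous_weight (r : ℝ) : Continuous (weight r) := by
  unfold weight
  fun_prop

theorem continuous_weightDr (r : ℝ) : Continuous (weightDr r) :=
  .div (by fun_prop) (continuous_weight r) (weight_ne_zero r)

theorem continuous_weightDw (r : ℝ) : Continuous (weightDw r) :=
  .div (by fun_prop) (continuous_weight r) (weight_ne_zero r)

theorem continuous_weightDrr (r : ℝ) : Continuous (weightDrr r) :=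
  .div (.sub (by fun_prop) ((continuous_weightDr r).pow 2)) (continuous_weight r) (weight_ne_zero r)

theorem continuous_weightDww (r : ℝ) : Continuous (weightDww r) :=
  .div (.sub (by fun_prop) ((continuous_weightDw r).pow 2)) (continuous_weight r) (weight_ne_zero r)

theorem weightDww_add_weightDrr_add_weightDr_div (hr : r ≠ 0) (w : ℝ) :
    weightDww r w + weightDrr r w + weightDr r w / r
      = weight r w / r ^ 2 - (weight r w - (weight r w ^ 3)⁻¹) := by
  have hW := weight_ne_zero r w
  simp only [weightDww, weightDrr, weightDw, weightDr, div_pow, neg_sq, mul_pow, Real.cos_sq',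
    sin_sq_eq_weight_sq hr (w := w)]
  field_simp
  ring

theorem rpow_half_sub_rpow_neg_three_halves (r w : ℝ) :
    (1 + Real.sin w ^ 2 / r ^ 2) ^ (1 / 2 : ℝ) - (1 + Real.sin w ^ 2 / r ^ 2) ^ (-(3 / 2) : ℝ)
      = weight r w - (weight r w ^ 3)⁻¹ := by
  rw [← weight_sq, ← Real.rpow_natCast_mul (weight_pos r w).le,
    ← Real.rpow_natCast_mul (weight_pos r w).le, ← Real.rpow_natCast,
    ← Real.rpow_neg (weight_pos r w).le]
  norm_num

theorem integral_weightDrr_add_integral_weightDr_div (hr : r ≠ 0) (a b : ℝ) :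
    (∫ w in a..b, weightDrr r w) + (∫ w in a..b, weightDr r w) / r
      = (∫ w in a..b, weight r w) / r ^ 2
        - (∫ w in a..b, ((1 + Real.sin w ^ 2 / r ^ 2) ^ (1 / 2 : ℝ)
            - (1 + Real.sin w ^ 2 / r ^ 2) ^ (-(3 / 2) : ℝ)))
        - (weightDw r b - weightDw r a) := by
  have integrable {g : ℝ → ℝ} (hg : Continuous g) :
      IntervalIntegrable g MeasureTheory.volume a b := hg.intervalIntegrable a b
  have hW := integrable (continuous_weight r)
  have hWr := integrable (continuous_weightDr r)
  have hWrr := integrable (continuous_weightDrr r)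
  have hWww := integrable (continuous_weightDww r)
  have hboundary : ∫ w in a..b, weightDww r w = weightDw r b - weightDw r a :=
    intervalIntegral.integral_eq_sub_of_hasDerivAt (fun w _ => hasDerivAt_weightDw hr w) hWww
  have hpointwise (w : ℝ) : (1 + Real.sin w ^ 2 / r ^ 2) ^ (1 / 2 : ℝ)
      - (1 + Real.sin w ^ 2 / r ^ 2) ^ (-(3 / 2) : ℝ)
      = weight r w / r ^ 2 - (weightDww r w + weightDrr r w + weightDr r w / r) := by
    rw [rpow_half_sub_rpow_neg_three_halves, weightDww_add_weightDrr_add_weightDr_div hr]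
    ring
  simp only [hpointwise]
  rw [intervalIntegral.integral_sub (hW.div_const _) ((hWww.add hWrr).add (hWr.div_const _)),
    intervalIntegral.integral_add (hWww.add hWrr) (hWr.div_const _),
    intervalIntegral.integral_add hWww hWrr, intervalIntegral.integral_div,
    intervalIntegral.integral_div, hboundary]
  ring

section Slices

variable {v : ℝ → ℝ} {t : ℝ}

theorem hasDerivAt_integral_weight_time (hv : DifferentiableAt ℝ v t) :
    HasDerivAt (fun s => ∫ w in a..v s, weight r w) (weight r (v t) * deriv v t) t :=
  ((continuous_weight r).integral_hasStrictDerivAt a (v t)).hasDerivAt.comp t hv.hasDerivAt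

theorem deriv_deriv_integral_weight_time (hr : r ≠ 0) (hv : ContDiffAt ℝ 2 v t) :
    deriv (fun t => deriv (fun s => ∫ w in a..v s, weight r w) t) t
      = weight r (v t) * deriv (deriv v) t + weightDw r (v t) * deriv v t ^ 2 := by
  have hv' : DifferentiableAt ℝ (deriv v) t :=
    (hv.derivWithin (m := 1) (by norm_num)).differentiableAt (by norm_num)
  have hfirst : (fun t => deriv (fun s => ∫ w in a..v s, weight r w) t)
      =ᶠ[𝓝 t] fun t => weight r (v t) * deriv v t := by
    filter_upwards [hv.eventually (by simp)] with s hs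
    exact (hasDerivAt_integral_weight_time (hs.differentiableAt (by norm_num))).deriv
  have hW := hasDerivAt_weight_comp (hasDerivAt_const t r)
    (hv.differentiableAt (by norm_num)).hasDerivAt hr
  rw [hfirst.deriv_eq, (hW.fun_mul hv'.hasDerivAt).deriv]
  ring

theorem hasDerivAt_integral_weight_radius (hr : r ≠ 0) (hv : DifferentiableAt ℝ v r) :
    HasDerivAt (fun s => ∫ w in a..v s, weight s w)
      (deriv v r * weight r (v r) + ∫ w in a..v r, weightDr r w) r :=
  hasDerivAt_intervalIntegral_leibniz (isOpen_compl_singleton.mem_nhds hr) continuousOn_weight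
    continuousOn_weightDr (fun _ hx w => hasDerivAt_weight_left hx w) hv.hasDerivAt

theorem deriv_deriv_integral_weight_radius (hr : r ≠ 0) (hv : ContDiffAt ℝ 2 v r) :
    deriv (fun r => deriv (fun s => ∫ w in a..v s, weight s w) r) r
      = weight r (v r) * deriv (deriv v) r + weightDw r (v r) * deriv v r ^ 2
        + 2 * weightDr r (v r) * deriv v r + ∫ w in a..v r, weightDrr r w := by
  have hv₁ : HasDerivAt v (deriv v r) r := (hv.differentiableAt (by norm_num)).hasDerivAt
  have hv₂ : DifferentiableAt ℝ (deriv v) r :=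
    (hv.derivWithin (m := 1) (by norm_num)).differentiableAt (by norm_num)
  have hfirst : (fun r => deriv (fun s => ∫ w in a..v s, weight s w) r)
      =ᶠ[𝓝 r] fun r => deriv v r * weight r (v r) + ∫ w in a..v r, weightDr r w := by
    filter_upwards [hv.eventually (by simp), isOpen_compl_singleton.mem_nhds hr] with s hs hs₀
    exact (hasDerivAt_integral_weight_radius hs₀ (hs.differentiableAt (by norm_num))).deriv
  have hW := hasDerivAt_weight_comp (hasDerivAt_id' r) hv₁ hr
  have hint := hasDerivAt_intervalIntegral_leibniz (a := a)
    (isOpen_compl_singleton.mem_nhds hr) continuousOn_weightDr continuousOn_weightDrr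
    (fun _ hx w => hasDerivAt_weightDr hx w) hv₁
  rw [hfirst.deriv_eq, ((hv₂.hasDerivAt.fun_mul hW).fun_add hint).deriv]
  simp only [smul_eq_mul]
  ring

end Slices

/-- The radial wave operator `□₂₊₁ = ∂_t² - ∂_r² - (1/r) ∂_r` on functions of `(t, r)`. -/
noncomputable def waveOperator (Φ : ℝ × ℝ → ℝ) (q : ℝ × ℝ) : ℝ :=
  deriv (fun t => deriv (fun s => Φ (s, q.2)) t) q.1
    - deriv (fun r => deriv (fun s => Φ (q.1, s)) r) q.2
    - (1 / q.2) * deriv (fun r => Φ (q.1, r)) q.2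

/-- The left-hand side of the equivariant Faddeev equation for `u`. -/
noncomputable def faddeevOperator (u : ℝ × ℝ → ℝ) (q : ℝ × ℝ) : ℝ :=
  (1 + Real.sin (u q) ^ 2 / q.2 ^ 2)
      * (deriv (fun t => deriv (fun s => u (s, q.2)) t) q.1
        - deriv (fun r => deriv (fun s => u (q.1, s)) r) q.2)
    - (1 - Real.sin (u q) ^ 2 / q.2 ^ 2) * deriv (fun r => u (q.1, r)) q.2 / q.2
    + Real.sin (2 * u q) / (2 * q.2 ^ 2)
      * (1 + deriv (fun t => u (t, q.2)) q.1 ^ 2 - deriv (fun r => u (q.1, r)) q.2 ^ 2)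

/-- The function `Φ₁` of the theorem, with the base point `N₁π` replaced by an arbitrary `a`. -/
noncomputable def potential (a : ℝ) (u : ℝ × ℝ → ℝ) (q : ℝ × ℝ) : ℝ :=
  ∫ w in a..u q, weight q.2 w

theorem waveOperator_potential {u : ℝ × ℝ → ℝ} {q : ℝ × ℝ} (hq : q.2 ≠ 0)
    (hu : ContDiffAt ℝ 2 u q) (a : ℝ) :
    waveOperator (potential a u) q
      = faddeevOperator u q / weight q.2 (u q) - weightDw q.2 (u q)
        - ((∫ w in a..u q, weightDrr q.2 w) + (∫ w in a..u q, weightDr q.2 w) / q.2) := by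
  obtain ⟨t, r⟩ := q
  have hut : ContDiffAt ℝ 2 (fun s => u (s, r)) t :=
    hu.comp (f := fun s => (s, r)) t (contDiffAt_id.prodMk contDiffAt_const)
  have hur : ContDiffAt ℝ 2 (fun s => u (t, s)) r :=
    hu.comp (f := fun s => (t, s)) r (contDiffAt_const.prodMk contDiffAt_id)
  have hW := weight_ne_zero r (u (t, r))
  simp only [waveOperator, faddeevOperator, potential] at hq ⊢
  rw [deriv_deriv_integral_weight_time hq hut, deriv_deriv_integral_weight_radius hq hur,
    (hasDerivAt_integral_weight_radius hq (hur.differentiableAt (by norm_num))).deriv,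
    Real.sin_two_mul]
  simp only [weightDw, weightDr, sin_sq_eq_weight_sq hq (w := u (t, r))]
  field_simp
  ring

end Faddeev

open Faddeev in
theorem stmt_6_general {a : ℝ} (ha : Real.sin (2 * a) = 0) {u : ℝ × ℝ → ℝ} {q : ℝ × ℝ}
    (hq : q.2 ≠ 0) (hu : ContDiffAt ℝ 2 u q) :
    waveOperator (potential a u) q
      = -potential a u q / q.2 ^ 2
        + (∫ w in a..u q, ((1 + Real.sin w ^ 2 / q.2 ^ 2) ^ (1 / 2 : ℝ)
            - (1 + Real.sin w ^ 2 / q.2 ^ 2) ^ (-(3 / 2) : ℝ)))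
        + faddeevOperator u q / weight q.2 (u q) := by
  rw [waveOperator_potential hq hu, integral_weightDrr_add_integral_weightDr_div hq,
    weightDw_eq_zero_of_sin_two_mul_eq_zero ha, potential]
  ring

/-- If `u` is `C²` on an open set `Ω ⊆ ℝ × (0,∞)` and satisfies the (2+1)-dimensional
equivariant Faddeev equation there, then `Φ₁(t,r) = ∫_{N₁π}^{u(t,r)} A^{1/2}(r,w) dw`
satisfies `□₂₊₁ Φ₁ = -Φ₁/r² + ∫_{N₁π}^{u} (A^{1/2} - A^{-3/2}) dw` on `Ω`,
where `A(r,w) = 1 + sin²w/r²`. -/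
theorem stmt_6
    (Ω : Set (ℝ × ℝ)) (hΩopen : IsOpen Ω) (hΩpos : ∀ q ∈ Ω, 0 < q.2)
    (N₁ : ℤ)
    (u ut ur utt urr : ℝ × ℝ → ℝ)
    (hu : ContDiffOn ℝ 2 u Ω)
    (hut : ∀ q : ℝ × ℝ, ut q = deriv (fun t => u (t, q.2)) q.1)
    (hur : ∀ q : ℝ × ℝ, ur q = deriv (fun r => u (q.1, r)) q.2)
    (hutt : ∀ q : ℝ × ℝ, utt q = deriv (fun t => ut (t, q.2)) q.1)
    (hurr : ∀ q : ℝ × ℝ, urr q = deriv (fun r => ur (q.1, r)) q.2)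
    (heq : ∀ q ∈ Ω,
      (1 + Real.sin (u q) ^ 2 / q.2 ^ 2) * (utt q - urr q)
        - (1 - Real.sin (u q) ^ 2 / q.2 ^ 2) * ur q / q.2
        + Real.sin (2 * u q) / (2 * q.2 ^ 2) * (1 + ut q ^ 2 - ur q ^ 2) = 0)
    (Φ₁ : ℝ × ℝ → ℝ)
    (hΦ₁ : ∀ q : ℝ × ℝ, Φ₁ q =
      ∫ w in ((N₁ : ℝ) * Real.pi)..(u q), Real.sqrt (1 + Real.sin w ^ 2 / q.2 ^ 2)) :
    ∀ q ∈ Ω,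
      deriv (fun t => deriv (fun s => Φ₁ (s, q.2)) t) q.1
        - deriv (fun r => deriv (fun s => Φ₁ (q.1, s)) r) q.2
        - (1 / q.2) * deriv (fun r => Φ₁ (q.1, r)) q.2
      = -Φ₁ q / q.2 ^ 2
        + ∫ w in ((N₁ : ℝ) * Real.pi)..(u q),
            ((1 + Real.sin w ^ 2 / q.2 ^ 2) ^ ((1 / 2) : ℝ)
              - (1 + Real.sin w ^ 2 / q.2 ^ 2) ^ (-(3 / 2) : ℝ)) := by
  intro q hq
  obtain rfl : Φ₁ = Faddeev.potential (N₁ * Real.pi) u := funext hΦ₁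
  have hbase : Real.sin (2 * (N₁ * Real.pi)) = 0 := by
    simpa [mul_assoc] using Real.sin_int_mul_pi (2 * N₁)
  have hfaddeev : Faddeev.faddeevOperator u q = 0 := by
    simpa only [Faddeev.faddeevOperator, hutt, hurr, hut, hur] using heq q hq
  simpa only [Faddeev.waveOperator, hfaddeev, zero_div, add_zero] using
    stmt_6_general hbase (hΩpos q hq).ne' (hu.contDiffAt (hΩopen.mem_nhds hq))
end

section
/- There exist constants c > 0 and C > 0 such that for every r > 0 and every v ≥ 0 with r·v ≤ 1, writing Ã = Ã(r,y) = 1 + sin²(ry)/r², one has c·min(v², v³) ≤ ∫₀^v (Ã^{−1/2} + Ã^{−3/2})·(Ã − 1) dy ≤ C·min(v², v³). -/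
/-!
Put `s = sin (r y) / r`, so that `Ã = 1 + s²`. Since `Ã ≥ 1`, the power `Ã ^ (-1/2)` dominates
`Ã ^ (-3/2)`, and the integrand is comparable to `s² / √(1 + s²)`, that is, to `min |s| s²`.
Jordan's inequality `2 x / π ≤ sin x ≤ x` makes `s` comparable to `y` as long as `r y ≤ π / 2`,
and `∫₀^v min y y² dy` is comparable to `min v² v³`. A larger bound `r v ≤ L` only costs a
constant: the integrand is nonnegative, so the lower bound may be taken over `[0, θ v]` for a
fixed `θ ∈ (0, 1]`.
-/

open Real intervalIntegral

/-- The quantity `(A^{-1/2} + A^{-3/2}) (A - 1)` measuring how far a factor `A ≥ 1` is from `1`;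
evaluated at `warpFactor r y` it is the integrand to be estimated. -/
noncomputable def weightedExcess (A : ℝ) : ℝ :=
  (A ^ (-(1 / 2) : ℝ) + A ^ (-(3 / 2) : ℝ)) * (A - 1)

/-- The factor `Ã(r, y) = 1 + sin²(r y) / r²`. At `r = 0` division by zero makes it `1`, not the
limit `1 + y²`. -/
noncomputable def warpFactor (r y : ℝ) : ℝ :=
  1 + sin (r * y) ^ 2 / r ^ 2

section WeightedExcess

variable {A : ℝ}

lemma weightedExcess_nonneg (hA : 1 ≤ A) : 0 ≤ weightedExcess A :=
  mul_nonneg (by positivity) (sub_nonneg.2 hA)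

lemma div_sqrt_le_weightedExcess (hA : 1 ≤ A) : (A - 1) / √A ≤ weightedExcess A := by
  have hA0 : 0 ≤ A := zero_le_one.trans hA
  rw [weightedExcess, rpow_neg hA0 (1 / 2), ← sqrt_eq_rpow, div_eq_inv_mul]
  exact mul_le_mul_of_nonneg_right (le_add_of_nonneg_right (rpow_nonneg hA0 _)) (sub_nonneg.2 hA)

lemma weightedExcess_le_two_mul_div_sqrt (hA : 1 ≤ A) :
    weightedExcess A ≤ 2 * ((A - 1) / √A) := by
  have hpow : A ^ (-(3 / 2) : ℝ) ≤ A ^ (-(1 / 2) : ℝ) :=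
    rpow_le_rpow_of_exponent_le hA (by norm_num)
  calc weightedExcess A
      ≤ (A ^ (-(1 / 2) : ℝ) + A ^ (-(1 / 2) : ℝ)) * (A - 1) :=
        mul_le_mul_of_nonneg_right (by gcongr) (sub_nonneg.2 hA)
    _ = 2 * ((A - 1) / √A) := by
        rw [rpow_neg (zero_le_one.trans hA), ← sqrt_eq_rpow]
        ring

end WeightedExcess

lemma min_abs_sq_div_two_le_sq_div_sqrt (s : ℝ) : min |s| (s ^ 2) / 2 ≤ s ^ 2 / √(1 + s ^ 2) := by
  have hsqrt : √(1 + s ^ 2) ≤ 1 + |s| :=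
    sqrt_le_iff.2 ⟨by positivity, by nlinarith [abs_nonneg s, sq_abs s]⟩
  have hmin : min |s| (s ^ 2) * (1 + |s|) ≤ 2 * s ^ 2 := by
    have := mul_le_mul_of_nonneg_right (min_le_left |s| (s ^ 2)) (abs_nonneg s)
    linarith [min_le_right |s| (s ^ 2), abs_mul_abs_self s]
  calc min |s| (s ^ 2) / 2
      ≤ s ^ 2 / (1 + |s|) := by
        rw [div_le_div_iff₀ two_pos (by positivity)]
        linarith
    _ ≤ s ^ 2 / √(1 + s ^ 2) := by gcongr

lemma sq_div_sqrt_le_min_abs_sq (s : ℝ) : s ^ 2 / √(1 + s ^ 2) ≤ min |s| (s ^ 2) := by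
  have hone : 1 ≤ √(1 + s ^ 2) := one_le_sqrt.2 (by nlinarith)
  have habs : |s| ≤ √(1 + s ^ 2) := abs_le_sqrt (by linarith)
  refine le_min ?_ (div_le_self (sq_nonneg s) hone)
  rw [div_le_iff₀ (by positivity)]
  calc s ^ 2 = |s| * |s| := by rw [abs_mul_abs_self, sq]
    _ ≤ |s| * √(1 + s ^ 2) := mul_le_mul_of_nonneg_left habs (abs_nonneg s)

section WarpFactor

variable {r y : ℝ}

lemma one_le_warpFactor (r y : ℝ) : 1 ≤ warpFactor r y :=
  le_add_of_nonneg_right (by positivity)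

lemma warpFactor_eq_one_add_sq (r y : ℝ) : warpFactor r y = 1 + (sin (r * y) / r) ^ 2 := by
  rw [warpFactor, div_pow]

lemma warpFactor_sub_one_div_sqrt (r y : ℝ) :
    (warpFactor r y - 1) / √(warpFactor r y) =
      (sin (r * y) / r) ^ 2 / √(1 + (sin (r * y) / r) ^ 2) := by
  rw [warpFactor_eq_one_add_sq, add_sub_cancel_left]

lemma continuous_weightedExcess_warpFactor (r : ℝ) :
    Continuous fun y ↦ weightedExcess (warpFactor r y) := by
  have hcont : Continuous (warpFactor r) := by
    unfold warpFactor
    fun_prop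
  have hne (y : ℝ) : warpFactor r y ≠ 0 := (zero_lt_one.trans_le (one_le_warpFactor r y)).ne'
  exact ((hcont.rpow_const fun y ↦ .inl (hne y)).add
    (hcont.rpow_const fun y ↦ .inl (hne y))).mul (hcont.sub continuous_const)

lemma abs_sin_mul_div_le (r y : ℝ) : |sin (r * y) / r| ≤ |y| := by
  rw [abs_div]
  refine div_le_of_le_mul₀ (abs_nonneg r) (abs_nonneg y) ?_
  rw [mul_comm, ← abs_mul]
  exact abs_sin_le_abs

lemma two_div_pi_mul_le_sin_mul_div (hr : 0 < r) (hy : 0 ≤ y) (hry : r * y ≤ π / 2) :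
    2 / π * y ≤ sin (r * y) / r := by
  rw [le_div_iff₀ hr, mul_assoc, mul_comm y]
  exact mul_le_sin (by positivity) hry

lemma weightedExcess_warpFactor_le (r : ℝ) (hy : 0 ≤ y) :
    weightedExcess (warpFactor r y) ≤ 2 * min y (y ^ 2) := by
  have hs : |sin (r * y) / r| ≤ y := (abs_sin_mul_div_le r y).trans_eq (abs_of_nonneg hy)
  calc weightedExcess (warpFactor r y)
      ≤ 2 * ((warpFactor r y - 1) / √(warpFactor r y)) :=
        weightedExcess_le_two_mul_div_sqrt (one_le_warpFactor r y)
    _ ≤ 2 * min |sin (r * y) / r| ((sin (r * y) / r) ^ 2) := by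
        rw [warpFactor_sub_one_div_sqrt]
        gcongr
        exact sq_div_sqrt_le_min_abs_sq _
    _ ≤ 2 * min y (y ^ 2) := by
        rw [← sq_abs (sin (r * y) / r)]
        gcongr

lemma le_weightedExcess_warpFactor (hr : 0 < r) (hy : 0 ≤ y) (hry : r * y ≤ π / 2) :
    2 / π ^ 2 * min y (y ^ 2) ≤ weightedExcess (warpFactor r y) := by
  have hs : 2 / π * y ≤ |sin (r * y) / r| :=
    (two_div_pi_mul_le_sin_mul_div hr hy hry).trans (le_abs_self _)
  have hsq : (2 / π) ^ 2 ≤ 2 / π :=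
    pow_le_of_le_one (by positivity) ((div_le_one pi_pos).2 two_le_pi) two_ne_zero
  calc 2 / π ^ 2 * min y (y ^ 2)
      = min ((2 / π) ^ 2 * y) ((2 / π * y) ^ 2) / 2 := by
        rw [mul_pow, ← mul_min_of_nonneg _ _ (by positivity)]
        ring
    _ ≤ min |sin (r * y) / r| ((sin (r * y) / r) ^ 2) / 2 := by
        rw [← sq_abs (sin (r * y) / r)]
        gcongr
        exact (mul_le_mul_of_nonneg_right hsq hy).trans hs
    _ ≤ (warpFactor r y - 1) / √(warpFactor r y) := by
        rw [warpFactor_sub_one_div_sqrt]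
        exact min_abs_sq_div_two_le_sq_div_sqrt _
    _ ≤ weightedExcess (warpFactor r y) := div_sqrt_le_weightedExcess (one_le_warpFactor r y)

end WarpFactor

section MinIntegral

variable {v : ℝ}

lemma integral_min_id_sq_le (hv : 0 ≤ v) :
    ∫ y in (0 : ℝ)..v, min y (y ^ 2) ≤ min (v ^ 2) (v ^ 3) / 2 := by
  have hint : IntervalIntegrable (fun y : ℝ ↦ min y (y ^ 2)) MeasureTheory.volume 0 v :=
    Continuous.intervalIntegrable (by fun_prop) _ _
  have hid : ∫ y in (0 : ℝ)..v, min y (y ^ 2) ≤ ∫ y in (0 : ℝ)..v, y :=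
    integral_mono_on hv hint intervalIntegrable_id fun y _ ↦ min_le_left _ _
  have hsq : ∫ y in (0 : ℝ)..v, min y (y ^ 2) ≤ ∫ y in (0 : ℝ)..v, y ^ 2 :=
    integral_mono_on hv hint (intervalIntegrable_pow 2) fun y _ ↦ min_le_right _ _
  rw [integral_id] at hid
  rw [integral_pow] at hsq
  have hv3 : 0 ≤ v ^ 3 := by positivity
  rw [le_div_iff₀ two_pos]
  refine le_min (by linarith) ?_
  norm_num at hsq
  linarith

lemma sq_div_max_one_le_min_id_sq {y : ℝ} (hy : 0 ≤ y) (hyv : y ≤ v) :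
    y ^ 2 / max 1 v ≤ min y (y ^ 2) := by
  refine le_min ?_ (div_le_self (sq_nonneg y) (le_max_left 1 v))
  rw [div_le_iff₀ (by positivity), sq]
  exact mul_le_mul_of_nonneg_left (hyv.trans (le_max_right 1 v)) hy

lemma min_sq_cube_eq_cube_div_max_one (hv : 0 ≤ v) : min (v ^ 2) (v ^ 3) = v ^ 3 / max 1 v := by
  rcases le_total v 1 with h | h
  · rw [max_eq_left h, div_one, min_eq_right (pow_le_pow_of_le_one hv h (by norm_num))]
  · have : v ≠ 0 := by positivity
    rw [max_eq_right h, min_eq_left (pow_le_pow_right₀ h (by norm_num))]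
    field_simp

lemma le_integral_min_id_sq (hv : 0 ≤ v) :
    min (v ^ 2) (v ^ 3) / 3 ≤ ∫ y in (0 : ℝ)..v, min y (y ^ 2) :=
  calc min (v ^ 2) (v ^ 3) / 3
      = ∫ y in (0 : ℝ)..v, y ^ 2 / max 1 v := by
        rw [min_sq_cube_eq_cube_div_max_one hv, integral_div, integral_pow]
        norm_num
        ring
    _ ≤ ∫ y in (0 : ℝ)..v, min y (y ^ 2) :=
        integral_mono_on hv (Continuous.intervalIntegrable (by fun_prop) _ _)
          (Continuous.intervalIntegrable (by fun_prop) _ _)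
          fun _ hy ↦ sq_div_max_one_le_min_id_sq hy.1 hy.2

lemma cube_mul_min_sq_cube_le {θ : ℝ} (hθ : 0 ≤ θ) (hθ1 : θ ≤ 1) (v : ℝ) :
    θ ^ 3 * min (v ^ 2) (v ^ 3) ≤ min ((θ * v) ^ 2) ((θ * v) ^ 3) := by
  rw [mul_min_of_nonneg _ _ (by positivity), mul_pow, mul_pow]
  exact min_le_min_right _
    (mul_le_mul_of_nonneg_right (pow_le_pow_of_le_one hθ hθ1 (by norm_num)) (sq_nonneg v))

end MinIntegral

section IntegralBounds

variable {r v : ℝ}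

lemma integral_weightedExcess_warpFactor_le (r : ℝ) (hv : 0 ≤ v) :
    ∫ y in (0 : ℝ)..v, weightedExcess (warpFactor r y) ≤ min (v ^ 2) (v ^ 3) :=
  calc ∫ y in (0 : ℝ)..v, weightedExcess (warpFactor r y)
      ≤ ∫ y in (0 : ℝ)..v, 2 * min y (y ^ 2) :=
        integral_mono_on hv ((continuous_weightedExcess_warpFactor r).intervalIntegrable _ _)
          (Continuous.intervalIntegrable (by fun_prop) _ _)
          fun _ hy ↦ weightedExcess_warpFactor_le r hy.1
    _ ≤ min (v ^ 2) (v ^ 3) := by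
        rw [integral_const_mul]
        linarith [integral_min_id_sq_le hv]

lemma le_integral_weightedExcess_warpFactor (hr : 0 < r) (hv : 0 ≤ v) (hrv : r * v ≤ π / 2) :
    2 / (3 * π ^ 2) * min (v ^ 2) (v ^ 3) ≤
      ∫ y in (0 : ℝ)..v, weightedExcess (warpFactor r y) :=
  calc 2 / (3 * π ^ 2) * min (v ^ 2) (v ^ 3)
      = 2 / π ^ 2 * (min (v ^ 2) (v ^ 3) / 3) := by ring
    _ ≤ 2 / π ^ 2 * ∫ y in (0 : ℝ)..v, min y (y ^ 2) := by
        gcongr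
        exact le_integral_min_id_sq hv
    _ = ∫ y in (0 : ℝ)..v, 2 / π ^ 2 * min y (y ^ 2) := (integral_const_mul _ _).symm
    _ ≤ ∫ y in (0 : ℝ)..v, weightedExcess (warpFactor r y) :=
        integral_mono_on hv (Continuous.intervalIntegrable (by fun_prop) _ _)
          ((continuous_weightedExcess_warpFactor r).intervalIntegrable _ _)
          fun _ hy ↦ le_weightedExcess_warpFactor hr hy.1
            ((mul_le_mul_of_nonneg_left hy.2 hr.le).trans hrv)

lemma le_integral_weightedExcess_warpFactor_of_mul_le {θ : ℝ} (hθ : 0 ≤ θ) (hθ1 : θ ≤ 1)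
    (hr : 0 < r) (hv : 0 ≤ v) (hrv : θ * (r * v) ≤ π / 2) :
    2 / (3 * π ^ 2) * θ ^ 3 * min (v ^ 2) (v ^ 3) ≤
      ∫ y in (0 : ℝ)..v, weightedExcess (warpFactor r y) :=
  calc 2 / (3 * π ^ 2) * θ ^ 3 * min (v ^ 2) (v ^ 3)
      ≤ 2 / (3 * π ^ 2) * min ((θ * v) ^ 2) ((θ * v) ^ 3) := by
        rw [mul_assoc]
        gcongr
        exact cube_mul_min_sq_cube_le hθ hθ1 v
    _ ≤ ∫ y in (0 : ℝ)..(θ * v), weightedExcess (warpFactor r y) :=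
        le_integral_weightedExcess_warpFactor hr (by positivity) (by rwa [mul_left_comm])
    _ ≤ ∫ y in (0 : ℝ)..v, weightedExcess (warpFactor r y) :=
        integral_mono_interval le_rfl (by positivity) (mul_le_of_le_one_left hv hθ1)
          (.of_forall fun y ↦ weightedExcess_nonneg (one_le_warpFactor r y))
          ((continuous_weightedExcess_warpFactor r).intervalIntegrable _ _)

end IntegralBounds

theorem stmt_8_general (L : ℝ) :
    ∃ c C : ℝ, 0 < c ∧ 0 < C ∧
      ∀ r v : ℝ, 0 < r → 0 ≤ v → r * v ≤ L →
        c * min (v ^ 2) (v ^ 3) ≤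
            (∫ y in (0 : ℝ)..v,
              ((1 + Real.sin (r * y) ^ 2 / r ^ 2) ^ (-(1 / 2) : ℝ)
                  + (1 + Real.sin (r * y) ^ 2 / r ^ 2) ^ (-(3 / 2) : ℝ))
                * ((1 + Real.sin (r * y) ^ 2 / r ^ 2) - 1)) ∧
          (∫ y in (0 : ℝ)..v,
              ((1 + Real.sin (r * y) ^ 2 / r ^ 2) ^ (-(1 / 2) : ℝ)
                  + (1 + Real.sin (r * y) ^ 2 / r ^ 2) ^ (-(3 / 2) : ℝ))
                * ((1 + Real.sin (r * y) ^ 2 / r ^ 2) - 1)) ≤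
            C * min (v ^ 2) (v ^ 3) := by
  obtain ⟨θ, hθ, hθ1, hθL⟩ : ∃ θ : ℝ, 0 < θ ∧ θ ≤ 1 ∧ θ * L ≤ π / 2 := by
    refine ⟨π / 2 / max (π / 2) L, by positivity,
      div_le_one_of_le₀ (le_max_left _ _) (by positivity), ?_⟩
    rw [div_mul_eq_mul_div, div_le_iff₀ (by positivity)]
    gcongr
    exact le_max_right _ _
  refine ⟨2 / (3 * π ^ 2) * θ ^ 3, 1, by positivity, one_pos, fun r v hr hv hrv ↦ ⟨?_, ?_⟩⟩
  · exact le_integral_weightedExcess_warpFactor_of_mul_le hθ.le hθ1 hr hv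
      ((mul_le_mul_of_nonneg_left hrv hθ.le).trans hθL)
  · rw [one_mul]
    exact integral_weightedExcess_warpFactor_le r hv

/-- For `r > 0`, `v ≥ 0` with `r·v ≤ 1`, writing `Ã(r,y) = 1 + sin²(ry)/r²`, the quantity
`∫₀^v (Ã^{-1/2} + Ã^{-3/2})(Ã - 1) dy` is comparable to `min(v², v³)`,
with absolute comparison constants. -/
theorem stmt_8 :
    ∃ c C : ℝ, 0 < c ∧ 0 < C ∧
      ∀ r v : ℝ, 0 < r → 0 ≤ v → r * v ≤ 1 →
        c * min (v ^ 2) (v ^ 3) ≤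
            (∫ y in (0 : ℝ)..v,
              ((1 + Real.sin (r * y) ^ 2 / r ^ 2) ^ (-(1 / 2) : ℝ)
                  + (1 + Real.sin (r * y) ^ 2 / r ^ 2) ^ (-(3 / 2) : ℝ))
                * ((1 + Real.sin (r * y) ^ 2 / r ^ 2) - 1)) ∧
          (∫ y in (0 : ℝ)..v,
              ((1 + Real.sin (r * y) ^ 2 / r ^ 2) ^ (-(1 / 2) : ℝ)
                  + (1 + Real.sin (r * y) ^ 2 / r ^ 2) ^ (-(3 / 2) : ℝ))
                * ((1 + Real.sin (r * y) ^ 2 / r ^ 2) - 1)) ≤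
            C * min (v ^ 2) (v ^ 3) :=
  stmt_8_general 1
end

section
/- There exists a constant C > 0 such that for every r > 0 and every v ∈ ℝ, ∫₀^{|v|} |y·sin(2ry)/r² − 2·sin²(ry)/r³| dy ≤ C·r·|v|⁵. -/
/-! With `x = r * y` the integrand is `2 * sin x * (x * cos x - sin x) / r ^ 3`. The function
`sin x - x * cos x` vanishes at `0` and has derivative `x * sin x`, which is at most `x ^ 2` in
absolute value, so it is bounded by `|x| ^ 3 / 3`. Together with `|sin x| ≤ |x|` this bounds the
integrand by `2 / 3 * |r| * y ^ 4`. -/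

open Real

theorem hasDerivAt_sin_sub_mul_cos (x : ℝ) :
    HasDerivAt (fun t ↦ sin t - t * cos t) (x * sin x) x := by
  have h := (hasDerivAt_sin x).fun_sub ((hasDerivAt_id' x).fun_mul (hasDerivAt_cos x))
  exact h.congr_deriv (by ring)

theorem integral_mul_sin (a b : ℝ) :
    ∫ t in a..b, t * sin t = (sin b - b * cos b) - (sin a - a * cos a) :=
  intervalIntegral.integral_eq_sub_of_hasDerivAt (fun t _ ↦ hasDerivAt_sin_sub_mul_cos t)
    ((continuous_id.mul continuous_sin).intervalIntegrable a b)

theorem abs_mul_sin_le_sq (x : ℝ) : |x * sin x| ≤ x ^ 2 :=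
  calc |x * sin x| = |x| * |sin x| := abs_mul _ _
    _ ≤ |x| * |x| := mul_le_mul_of_nonneg_left abs_sin_le_abs (abs_nonneg x)
    _ = x ^ 2 := by rw [abs_mul_abs_self, sq]

theorem abs_sin_sub_mul_cos_le (x : ℝ) : |sin x - x * cos x| ≤ |x| ^ 3 / 3 :=
  calc |sin x - x * cos x| = |∫ t in 0..x, t * sin t| := by simp [integral_mul_sin]
    _ ≤ |∫ t in 0..x, t ^ 2| :=
      intervalIntegral.norm_integral_le_abs_of_norm_le (f := fun t ↦ t * sin t)
        (.of_forall abs_mul_sin_le_sq) ((continuous_pow 2).intervalIntegrable 0 x)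
    _ = |x| ^ 3 / 3 := by norm_num [integral_pow, abs_div, abs_pow]

theorem mul_sin_two_mul_div_sub_eq {r : ℝ} (hr : r ≠ 0) (y : ℝ) :
    y * sin (2 * r * y) / r ^ 2 - 2 * sin (r * y) ^ 2 / r ^ 3 =
      2 * sin (r * y) * (r * y * cos (r * y) - sin (r * y)) / r ^ 3 := by
  rw [mul_assoc 2 r y, sin_two_mul]
  field_simp

theorem abs_mul_sin_two_mul_div_sub_le {r : ℝ} (hr : r ≠ 0) (y : ℝ) :
    |y * sin (2 * r * y) / r ^ 2 - 2 * sin (r * y) ^ 2 / r ^ 3| ≤ 2 / 3 * |r| * y ^ 4 :=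
  calc |y * sin (2 * r * y) / r ^ 2 - 2 * sin (r * y) ^ 2 / r ^ 3|
      = 2 * |sin (r * y)| * |sin (r * y) - r * y * cos (r * y)| / |r| ^ 3 := by
        rw [mul_sin_two_mul_div_sub_eq hr, abs_div, abs_mul, abs_mul, abs_two, abs_pow,
          abs_sub_comm (sin _)]
    _ ≤ 2 * |r * y| * (|r * y| ^ 3 / 3) / |r| ^ 3 := by
        gcongr ?_ / _
        exact mul_le_mul (mul_le_mul_of_nonneg_left abs_sin_le_abs zero_le_two)
          (abs_sin_sub_mul_cos_le _) (abs_nonneg _) (by positivity)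
    _ = 2 / 3 * |r| * |y| ^ 4 := by
        rw [abs_mul]
        field_simp
    _ = 2 / 3 * |r| * y ^ 4 := by rw [Even.pow_abs (by decide)]

theorem stmt_13_general {r : ℝ} (hr : r ≠ 0) (v : ℝ) :
    ∫ y in (0 : ℝ)..|v|, |y * sin (2 * r * y) / r ^ 2 - 2 * sin (r * y) ^ 2 / r ^ 3| ≤
      2 / 15 * |r| * |v| ^ 5 :=
  calc ∫ y in (0 : ℝ)..|v|, |y * sin (2 * r * y) / r ^ 2 - 2 * sin (r * y) ^ 2 / r ^ 3|
      ≤ ∫ y in (0 : ℝ)..|v|, 2 / 3 * |r| * y ^ 4 :=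
        intervalIntegral.integral_mono_on (abs_nonneg v)
          (Continuous.intervalIntegrable (by fun_prop) _ _)
          (Continuous.intervalIntegrable (by fun_prop) _ _)
          (fun y _ ↦ abs_mul_sin_two_mul_div_sub_le hr y)
    _ = 2 / 15 * |r| * |v| ^ 5 := by
        rw [intervalIntegral.integral_const_mul, integral_pow]
        ring

/-- Integrated bound on `|∂ᵣ Ã|` for `Ã(r,y) = 1 + sin²(ry)/r²`:
`∫₀^{|v|} |y·sin(2ry)/r² - 2·sin²(ry)/r³| dy ≤ C·r·|v|⁵` with an absolute constant `C`. -/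
theorem stmt_13 :
    ∃ C : ℝ, 0 < C ∧
      ∀ r : ℝ, 0 < r → ∀ v : ℝ,
        (∫ y in (0 : ℝ)..|v|,
            |y * Real.sin (2 * r * y) / r ^ 2 - 2 * Real.sin (r * y) ^ 2 / r ^ 3|) ≤
          C * r * |v| ^ 5 :=
  ⟨2 / 15, by norm_num, fun r hr v ↦ by simpa only [abs_of_pos hr] using stmt_13_general hr.ne' v⟩
end

section
/- Let K > 0, let N₁ be an integer, and let φ : (0,∞) → ℝ satisfy φ(r) = N₁π for all r ≤ 1 and φ(r) = 0 for all r ≥ 2. Suppose v : (0,∞) → ℝ satisfies |v(r)| ≤ K·min(r^{−3/2}, r^{−1/2}) for all r > 0, and set u(r) = r·v(r) + φ(r). Then, with C = max(K, √2), for all r > 0: |sin(u(r))| ≤ C·min(r^{1/2}, r^{−1/2}), and consequently 0 ≤ sin²(u(r))/r² ≤ C²·min(r^{−1}, r^{−3}). -/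
/-! Where `φ r` is an integer multiple of `π`, `sin (r * v r + φ r)` agrees with `sin (r * v r)` up
to sign, so the decay of `v` passes to `sin ∘ u` through `|sin x| ≤ |x|`. On the remaining bounded
range of radii `|sin| ≤ 1` suffices: there the envelope is bounded below, and the second entry of
the maximum compensates for its smallest value. -/

namespace RadialDecay

theorem abs_sin_add_int_mul_pi_le_abs (x : ℝ) (n : ℤ) :
    |Real.sin (x + n * Real.pi)| ≤ |x| := by
  rw [Real.sin_add_int_mul_pi, abs_mul, abs_neg_one_zpow, one_mul]
  exact Real.abs_sin_le_abs

section Rpow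

variable {r : ℝ}

theorem min_rpow_mul_rpow (hr : 0 < r) (a b c : ℝ) :
    min (r ^ a) (r ^ b) * r ^ c = min (r ^ (a + c)) (r ^ (b + c)) := by
  rw [min_mul_of_nonneg _ _ (Real.rpow_nonneg hr.le c), Real.rpow_add hr, Real.rpow_add hr]

theorem min_rpow_pow (hr : 0 ≤ r) (a b : ℝ) (n : ℕ) :
    min (r ^ a) (r ^ b) ^ n = min (r ^ (a * n)) (r ^ (b * n)) := by
  rw [Real.rpow_mul_natCast hr, Real.rpow_mul_natCast hr]
  exact (pow_left_monotoneOn (n := n)).map_min (Real.rpow_nonneg hr a) (Real.rpow_nonneg hr b)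

theorem one_le_rpow_mul_min_rpow {R a b : ℝ} (hr : 1 ≤ r) (hrR : r ≤ R) (ha : 0 ≤ a)
    (hb : 0 ≤ b) : 1 ≤ R ^ b * min (r ^ a) (r ^ (-b)) := by
  have hr₀ : 0 < r := one_pos.trans_le hr
  have hmin : min (r ^ a) (r ^ (-b)) = r ^ (-b) :=
    min_eq_right (Real.rpow_le_rpow_of_exponent_le hr (by linarith))
  calc
    1 = r ^ b * r ^ (-b) := by rw [← Real.rpow_add hr₀, add_neg_cancel, Real.rpow_zero]
    _ ≤ R ^ b * min (r ^ a) (r ^ (-b)) := by rw [hmin]; gcongr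

theorem mul_rpow_le_mul_min_rpow_add {y C a b : ℝ} (hr : 0 < r)
    (hy : y ≤ C * min (r ^ a) (r ^ b)) (c : ℝ) :
    y * r ^ c ≤ C * min (r ^ (a + c)) (r ^ (b + c)) :=
  calc
    y * r ^ c ≤ C * min (r ^ a) (r ^ b) * r ^ c := by gcongr
    _ = C * min (r ^ (a + c)) (r ^ (b + c)) := by rw [mul_assoc, min_rpow_mul_rpow hr]

theorem abs_mul_le_mul_min_rpow {x C p q : ℝ} (hr : 0 < r)
    (hx : |x| ≤ C * min (r ^ (-p)) (r ^ (-q))) :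
    |r * x| ≤ C * min (r ^ (1 - q)) (r ^ (1 - p)) :=
  calc
    |r * x| = |x| * r ^ (1 : ℝ) := by rw [abs_mul, abs_of_pos hr, Real.rpow_one, mul_comm]
    _ ≤ C * min (r ^ (-p + 1)) (r ^ (-q + 1)) := mul_rpow_le_mul_min_rpow_add hr hx 1
    _ = C * min (r ^ (1 - q)) (r ^ (1 - p)) := by
      rw [min_comm, neg_add_eq_sub, neg_add_eq_sub]

theorem sq_div_sq_le_sq_mul_min_rpow {x C p q : ℝ} (hr : 0 < r)
    (hx : |x| ≤ C * min (r ^ (1 - q)) (r ^ (1 - p))) :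
    x ^ 2 / r ^ 2 ≤ C ^ 2 * min (r ^ (-(2 * q))) (r ^ (-(2 * p))) := by
  have hsub (s : ℝ) : 1 - s + -1 = -s := by ring
  have hdiv : |x| * r ^ (-1 : ℝ) ≤ C * min (r ^ (-q)) (r ^ (-p)) := by
    simpa only [hsub] using mul_rpow_le_mul_min_rpow_add hr hx (-1)
  calc
    x ^ 2 / r ^ 2 = (|x| * r ^ (-1 : ℝ)) ^ 2 := by
      rw [Real.rpow_neg_one, ← div_eq_mul_inv, div_pow, sq_abs]
    _ ≤ (C * min (r ^ (-q)) (r ^ (-p))) ^ 2 := by gcongr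
    _ = C ^ 2 * min (r ^ (-(2 * q))) (r ^ (-(2 * p))) := by
      rw [mul_pow, min_rpow_pow hr.le, Nat.cast_ofNat, neg_mul, neg_mul, mul_comm q, mul_comm p]

end Rpow

theorem abs_sin_mul_add_le_max_mul_min_rpow {K R p q r x θ : ℝ}
    (hq : q ≤ 1) (hp : 1 ≤ p) (hr : 0 < r)
    (hθ : r ≤ 1 ∨ R ≤ r → ∃ n : ℤ, θ = n * Real.pi)
    (hx : |x| ≤ K * min (r ^ (-p)) (r ^ (-q))) :
    |Real.sin (r * x + θ)| ≤ max K (R ^ (p - 1)) * min (r ^ (1 - q)) (r ^ (1 - p)) := by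
  by_cases hfar : r ≤ 1 ∨ R ≤ r
  · obtain ⟨n, rfl⟩ := hθ hfar
    calc
      |Real.sin (r * x + n * Real.pi)| ≤ |r * x| := abs_sin_add_int_mul_pi_le_abs _ n
      _ ≤ K * min (r ^ (1 - q)) (r ^ (1 - p)) := abs_mul_le_mul_min_rpow hr hx
      _ ≤ _ := by gcongr; exact le_max_left _ _
  · obtain ⟨hr₁, hrR⟩ := not_or.mp hfar
    calc
      |Real.sin (r * x + θ)| ≤ 1 := Real.abs_sin_le_one _
      _ ≤ R ^ (p - 1) * min (r ^ (1 - q)) (r ^ (1 - p)) := by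
        rw [← neg_sub p 1]
        exact one_le_rpow_mul_min_rpow (not_le.mp hr₁).le (not_le.mp hrR).le
          (sub_nonneg.mpr hq) (sub_nonneg.mpr hp)
      _ ≤ _ := by gcongr; exact le_max_right _ _

end RadialDecay

theorem stmt_17_general {K R p q : ℝ} (hq : q ≤ 1) (hp : 1 ≤ p) {φ v u : ℝ → ℝ}
    (hφ : ∀ r : ℝ, 0 < r → r ≤ 1 ∨ R ≤ r → ∃ n : ℤ, φ r = n * Real.pi)
    (hv : ∀ r : ℝ, 0 < r → |v r| ≤ K * min (r ^ (-p)) (r ^ (-q)))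
    (hu : ∀ r : ℝ, 0 < r → u r = r * v r + φ r) {r : ℝ} (hr : 0 < r) :
    |Real.sin (u r)| ≤ max K (R ^ (p - 1)) * min (r ^ (1 - q)) (r ^ (1 - p)) ∧
      0 ≤ Real.sin (u r) ^ 2 / r ^ 2 ∧
      Real.sin (u r) ^ 2 / r ^ 2 ≤
        max K (R ^ (p - 1)) ^ 2 * min (r ^ (-(2 * q))) (r ^ (-(2 * p))) := by
  have hsin : |Real.sin (u r)| ≤ max K (R ^ (p - 1)) * min (r ^ (1 - q)) (r ^ (1 - p)) := by
    rw [hu r hr]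
    exact RadialDecay.abs_sin_mul_add_le_max_mul_min_rpow hq hp hr (hφ r hr) (hv r hr)
  exact ⟨hsin, by positivity, RadialDecay.sq_div_sq_le_sq_mul_min_rpow hr hsin⟩

/-- Pointwise decay of `sin u` and of `Ã - 1 = sin²(u)/r²` for `u = r·v + φ`,
where `φ` is the radial cutoff equal to `N₁π` for `r ≤ 1` and to `0` for `r ≥ 2`,
and `|v(r)| ≤ K·min(r^{-3/2}, r^{-1/2})`. -/
theorem stmt_17 (K : ℝ) (hK : 0 < K) (N₁ : ℤ) (φ v u : ℝ → ℝ)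
    (hφ1 : ∀ r : ℝ, 0 < r → r ≤ 1 → φ r = (N₁ : ℝ) * Real.pi)
    (hφ2 : ∀ r : ℝ, 2 ≤ r → φ r = 0)
    (hv : ∀ r : ℝ, 0 < r → |v r| ≤ K * min (r ^ (-(3 / 2) : ℝ)) (r ^ (-(1 / 2) : ℝ)))
    (hu : ∀ r : ℝ, u r = r * v r + φ r) :
    ∀ r : ℝ, 0 < r →
      |Real.sin (u r)| ≤
          max K (Real.sqrt 2) * min (r ^ ((1 / 2) : ℝ)) (r ^ (-(1 / 2) : ℝ)) ∧
      0 ≤ Real.sin (u r) ^ 2 / r ^ 2 ∧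
      Real.sin (u r) ^ 2 / r ^ 2 ≤
        max K (Real.sqrt 2) ^ 2 * min (r ^ (-(1 : ℝ))) (r ^ (-(3 : ℝ))) := by
  intro r hr
  have hφ : ∀ s : ℝ, 0 < s → s ≤ 1 ∨ 2 ≤ s → ∃ n : ℤ, φ s = n * Real.pi := by
    rintro s hs (hs₁ | hs₂)
    exacts [⟨N₁, hφ1 s hs hs₁⟩, ⟨0, by simp [hφ2 s hs₂]⟩]
  rw [Real.sqrt_eq_rpow]
  convert stmt_17_general (R := 2) (p := 3 / 2) (q := 1 / 2) (by norm_num) (by norm_num)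
    hφ hv (fun s _ ↦ hu s) hr using 6 <;> norm_num
end

section
/- There exists a constant C > 0 such that for every r > 0 and all v, w ∈ ℝ, |−2·sin²(rv)/r³ + sin(2rv)·(v + r·w)/r²| ≤ C·(r·v⁴ + |v|·|w|). -/
/-!
The factorization `x sin 2x - 2 sin² x = 2 sin x (x cos x - sin x)` exhibits a cancellation: both
terms on the left are of size `x²`, but the right-hand side is `O(x⁴)`, because
`x cos x - sin x` vanishes at `0` and has derivative `-x sin x`, which is at most `x²` in absolute
value. The `v`-part of the expression is the left-hand side at `x = r v`, divided by `r³`; the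
`w`-part is `sin (2 r v) w / r`, where `|sin y| ≤ |y|` suffices.
-/

theorem hasDerivAt_mul_cos_sub_sin (x : ℝ) :
    HasDerivAt (fun t : ℝ ↦ t * Real.cos t - Real.sin t) (-(x * Real.sin x)) x :=
  (((hasDerivAt_id' x).mul (Real.hasDerivAt_cos x)).sub (Real.hasDerivAt_sin x)).congr_deriv
    (by ring)

theorem abs_mul_cos_sub_sin_le_of_nonneg {x : ℝ} (hx : 0 ≤ x) :
    |x * Real.cos x - Real.sin x| ≤ x ^ 3 / 3 := by
  have cube_deriv (t : ℝ) : HasDerivAt (fun t : ℝ ↦ t ^ 3 / 3) (t ^ 2) t :=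
    ((hasDerivAt_pow 3 t).div_const 3).congr_deriv (by norm_num)
  have deriv_le (t : ℝ) : ‖-(t * Real.sin t)‖ ≤ t ^ 2 := by
    rw [norm_neg, Real.norm_eq_abs, abs_mul, ← sq_abs t, sq]
    exact mul_le_mul_of_nonneg_left Real.abs_sin_le_abs (abs_nonneg t)
  exact image_norm_le_of_norm_deriv_right_le_deriv_boundary
    (fun t _ ↦ (hasDerivAt_mul_cos_sub_sin t).continuousAt.continuousWithinAt)
    (fun t _ ↦ (hasDerivAt_mul_cos_sub_sin t).hasDerivWithinAt)
    (by simp) cube_deriv (fun t _ ↦ deriv_le t) (Set.right_mem_Icc.mpr hx)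

theorem abs_mul_cos_sub_sin_le (x : ℝ) :
    |x * Real.cos x - Real.sin x| ≤ |x| ^ 3 / 3 := by
  rcases le_total 0 x with hx | hx
  · simpa only [abs_of_nonneg hx] using abs_mul_cos_sub_sin_le_of_nonneg hx
  · have h := abs_mul_cos_sub_sin_le_of_nonneg (neg_nonneg.mpr hx)
    rwa [Real.cos_neg, Real.sin_neg, neg_mul, ← neg_sub', abs_neg, ← abs_of_nonpos hx] at h

theorem abs_mul_sin_two_mul_sub_two_mul_sin_sq_le (x : ℝ) :
    |x * Real.sin (2 * x) - 2 * Real.sin x ^ 2| ≤ 2 / 3 * x ^ 4 := by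
  have factorization : x * Real.sin (2 * x) - 2 * Real.sin x ^ 2 =
      2 * (Real.sin x * (x * Real.cos x - Real.sin x)) := by
    rw [Real.sin_two_mul]
    ring
  calc |x * Real.sin (2 * x) - 2 * Real.sin x ^ 2|
      = 2 * (|Real.sin x| * |x * Real.cos x - Real.sin x|) := by
        rw [factorization, abs_mul, abs_mul, abs_two]
    _ ≤ 2 * (|x| * (|x| ^ 3 / 3)) := by
        gcongr ?_ * (?_ * ?_)
        · exact Real.abs_sin_le_abs
        · exact abs_mul_cos_sub_sin_le x
    _ = 2 / 3 * |x| ^ 4 := by ring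
    _ = 2 / 3 * x ^ 4 := by rw [Even.pow_abs (by decide)]

theorem stmt_19_general {r : ℝ} (hr : r ≠ 0) (v w : ℝ) :
    |(-2) * Real.sin (r * v) ^ 2 / r ^ 3 + Real.sin (2 * (r * v)) * (v + r * w) / r ^ 2| ≤
      2 / 3 * (|r| * v ^ 4) + 2 * (|v| * |w|) := by
  have abs_r_pos : 0 < |r| := abs_pos.mpr hr
  have decomposition : (-2) * Real.sin (r * v) ^ 2 / r ^ 3
        + Real.sin (2 * (r * v)) * (v + r * w) / r ^ 2 =
      (r * v * Real.sin (2 * (r * v)) - 2 * Real.sin (r * v) ^ 2) / r ^ 3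
        + Real.sin (2 * (r * v)) * w / r := by
    field_simp
    ring
  have v_part : |(r * v * Real.sin (2 * (r * v)) - 2 * Real.sin (r * v) ^ 2) / r ^ 3| ≤
      2 / 3 * (|r| * v ^ 4) := by
    rw [abs_div, abs_pow, div_le_iff₀ (pow_pos abs_r_pos 3)]
    calc |r * v * Real.sin (2 * (r * v)) - 2 * Real.sin (r * v) ^ 2|
        ≤ 2 / 3 * (r * v) ^ 4 := abs_mul_sin_two_mul_sub_two_mul_sin_sq_le (r * v)
      _ = 2 / 3 * (|r| ^ 4 * v ^ 4) := by rw [Even.pow_abs (by decide), mul_pow]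
      _ = 2 / 3 * (|r| * v ^ 4) * |r| ^ 3 := by ring
  have w_part : |Real.sin (2 * (r * v)) * w / r| ≤ 2 * (|v| * |w|) := by
    rw [abs_div, abs_mul, div_le_iff₀ abs_r_pos]
    calc |Real.sin (2 * (r * v))| * |w|
        ≤ |2 * (r * v)| * |w| :=
          mul_le_mul_of_nonneg_right Real.abs_sin_le_abs (abs_nonneg w)
      _ = 2 * (|v| * |w|) * |r| := by rw [abs_mul, abs_mul, abs_two]; ring
  rw [decomposition]
  exact (abs_add_le _ _).trans (add_le_add v_part w_part)

/-- Estimate, in the region where the cutoff is constant, of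
`|-2·sin²(rv)/r³ + sin(2rv)·(v + r·w)/r²| ≤ C·(r·v⁴ + |v|·|w|)`
with an absolute constant `C`. -/
theorem stmt_19 :
    ∃ C : ℝ, 0 < C ∧
      ∀ r : ℝ, 0 < r → ∀ v w : ℝ,
        |(-2) * Real.sin (r * v) ^ 2 / r ^ 3
            + Real.sin (2 * (r * v)) * (v + r * w) / r ^ 2| ≤
          C * (r * v ^ 4 + |v| * |w|) := by
  refine ⟨2, two_pos, fun r hr v w ↦ (stmt_19_general hr.ne' v w).trans ?_⟩
  rw [abs_of_pos hr, mul_add]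
  gcongr
  norm_num
end
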